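/- arXiv:2502.18396 — 2 statements merged into one kernel-verified Lean document; each statement's English description precedes it below -/
import Mathlib

section
/- Let Δ be a Cohen-Macaulay simplicial forest on vertex set V(Δ) and let R = K[x_v : v ∈ V(Δ)]. For 1 ≤ k ≤ ν(Δ), let d_k denote the minimum degree of a minimal monomial generator of I(Δ)^{[k]}, and set g(k) = depth(R/I(Δ)^{[k]}) − (d_k − 1). Then the normalized depth function g is nonincreasing, i.e. g(k+1) ≤ g(k) for all 1 ≤ k ≤ ν(Δ) − 1. -/
open MvPolynomial

/-- A simplicial complex on the vertex set `V`, presented by its set of facets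
(the maximal faces).  Every facet is nonempty and no facet contains another. -/
structure SimplicialComplexOn (V : Type) [Fintype V] [DecidableEq V] : Type where
  facets : Finset (Finset V)
  nonempty_facet : ∀ F ∈ facets, F.Nonempty
  antichain : ∀ F ∈ facets, ∀ G ∈ facets, F ⊆ G → F = G

variable {V : Type} [Fintype V] [DecidableEq V]

/-- `F` is a leaf of the collection of facets `S`: either `F` is the only facet, or
there is a facet `G ≠ F` (a joint) with `F ∩ H ⊆ F ∩ G` for every facet `H ≠ F`. -/
def IsLeafOf (S : Finset (Finset V)) (F : Finset V) : Prop :=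
  F ∈ S ∧ ((∀ H ∈ S, H = F) ∨
    ∃ G ∈ S, G ≠ F ∧ ∀ H ∈ S, H ≠ F → F ∩ H ⊆ F ∩ G)

/-- The forest property for a facet collection: every nonempty subcollection
(i.e. every nonempty subcomplex) has a leaf. -/
def HasLeafProp (S : Finset (Finset V)) : Prop :=
  ∀ T ⊆ S, T.Nonempty → ∃ F, IsLeafOf T F

/-- A good leaf: a facet which is a leaf of every subcomplex containing it. -/
def IsGoodLeafOf (S : Finset (Finset V)) (F : Finset V) : Prop :=
  F ∈ S ∧ ∀ T ⊆ S, F ∈ T → IsLeafOf T F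

/-- A special leaf: a leaf `F` such that for all facets `H, H' ≠ F`,
`H ∩ H' ≠ ∅` iff `(H ∩ H') \ F ≠ ∅`. -/
def IsSpecialLeafOf (S : Finset (Finset V)) (F : Finset V) : Prop :=
  IsLeafOf S F ∧ ∀ H ∈ S, ∀ H' ∈ S, H ≠ F → H' ≠ F →
    ((H ∩ H').Nonempty ↔ ((H ∩ H') \ F).Nonempty)

/-- A matching: a subcollection of the facets that is pairwise disjoint. -/
def IsMatchingOf (S : Finset (Finset V)) (M : Finset (Finset V)) : Prop :=
  M ⊆ S ∧ ∀ F ∈ M, ∀ G ∈ M, F ≠ G → F ∩ G = ∅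

/-- The matching number: maximum size of a matching. -/
noncomputable def matchingNumberOf (S : Finset (Finset V)) : ℕ :=
  sSup {n | ∃ M : Finset (Finset V), IsMatchingOf S M ∧ M.card = n}

/-- The facet collection `S` is grafted: it decomposes as `Fs ∪ Gs` where
(1) every vertex of a `G ∈ Gs` lies in some `F ∈ Fs`, (2) `Fs` is exactly the set
of leaves of `S`, (3) `Fs` and `Gs` are disjoint, (4) the members of `Fs` are
pairwise disjoint, and (5) for each `G ∈ Gs`, deleting the facet `G` leaves a
grafted collection. -/
inductive IsGrafted : Finset (Finset V) → Prop where
  | intro (S Fs Gs : Finset (Finset V))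
      (hunion : S = Fs ∪ Gs)
      (hdisj : Disjoint Fs Gs)
      (hcover : ∀ G ∈ Gs, ∀ v ∈ G, ∃ F ∈ Fs, v ∈ F)
      (hleaves : ∀ F, IsLeafOf S F ↔ F ∈ Fs)
      (hFdisj : ∀ F ∈ Fs, ∀ F' ∈ Fs, F ≠ F' → F ∩ F' = ∅)
      (hrec : ∀ G ∈ Gs, IsGrafted (S.erase G)) :
      IsGrafted S

/-- `S` is the (minimal presentation of the) grafting of the collection `Gs`
with the simplices `Fs`. -/
def IsGraftingDecomp (S Fs Gs : Finset (Finset V)) : Prop :=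
  S = Fs ∪ Gs ∧ Disjoint Fs Gs ∧
  (∀ G ∈ Gs, ∀ v ∈ G, ∃ F ∈ Fs, v ∈ F) ∧
  (∀ F, IsLeafOf S F ↔ F ∈ Fs) ∧
  (∀ F ∈ Fs, ∀ F' ∈ Fs, F ≠ F' → F ∩ F' = ∅) ∧
  (∀ G ∈ Gs, IsGrafted (S.erase G))

/-- A Cohen-Macaulay simplicial forest, combinatorially: a grafted simplicial forest. -/
def IsCMForestFacets (S : Finset (Finset V)) : Prop :=
  HasLeafProp S ∧ IsGrafted S

/-- The closed neighborhood `N[F] = {F} ∪ {G ∈ S : G ≠ F, G ∩ F ≠ ∅}`. -/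
def closedNbhd (S : Finset (Finset V)) (F : Finset V) : Finset (Finset V) :=
  insert F (S.filter fun G => G ≠ F ∧ (G ∩ F).Nonempty)

/-- The contraction of the facet collection `S` on `A`: the minimal members of
`{F \ A : F ∈ S}`. -/
def contraction (S : Finset (Finset V)) (A : Finset V) : Finset (Finset V) :=
  (S.image fun F => F \ A).filter fun F' => ∀ G ∈ S, G \ A ⊆ F' → G \ A = F'

variable (K : Type) [Field K]

/-- The square-free monomial `x_S = ∏_{v ∈ S} x_v`. -/
noncomputable def xMon (S : Finset V) : MvPolynomial V K := ∏ v ∈ S, X v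

/-- The facet ideal `I(Δ) = ⟨x_F : F a facet⟩`. -/
noncomputable def facetIdealOf (S : Finset (Finset V)) : Ideal (MvPolynomial V K) :=
  Ideal.span { p | ∃ F ∈ S, p = xMon K F }

/-- The `k`-th square-free power of an ideal: the ideal generated by all
square-free monomials lying in `I ^ k`. -/
noncomputable def sqfreePow (I : Ideal (MvPolynomial V K)) (k : ℕ) :
    Ideal (MvPolynomial V K) :=
  Ideal.span { p | (∃ S : Finset V, p = xMon K S) ∧ p ∈ I ^ k }

/-- The depth of `R/I` with respect to the homogeneous maximal ideal
`m = ⟨x_v : v ∈ V⟩`: the largest length of an `R/I`-regular sequence of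
elements of `m`. -/
noncomputable def gradedDepth (I : Ideal (MvPolynomial V K)) : ℕ :=
  sSup {n | ∃ rs : List (MvPolynomial V K), rs.length = n ∧
    (∀ r ∈ rs, r ∈ Ideal.span (Set.range (X : V → MvPolynomial V K))) ∧
    RingTheory.Sequence.IsRegular (MvPolynomial V K ⧸ I) rs}

/-- `R/I` is Cohen-Macaulay: its depth equals its Krull dimension. -/
def IsCMQuot (I : Ideal (MvPolynomial V K)) : Prop :=
  ((gradedDepth K I : ℕ∞) : WithBot ℕ∞) = ringKrullDim (MvPolynomial V K ⧸ I)


/-! ### Combinatorics of leaves -/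

theorem hasLeaf_mono {S T : Finset (Finset V)} (h : HasLeafProp S) (hT : T ⊆ S) :
    HasLeafProp T := fun T' hT' hne => h T' (hT'.trans hT) hne

theorem exists_leaf_ne (n : ℕ) : ∀ (T : Finset (Finset V)), T.card = n → HasLeafProp T →
    ∀ J ∈ T, 2 ≤ T.card → ∃ L, IsLeafOf T L ∧ L ≠ J := by
  induction n with
  | zero => intro T h1 _ J _ h2; omega
  | succ n ih =>
    intro T hcard hT J hJ h2
    obtain ⟨L0, hL0⟩ := hT T (Finset.Subset.refl _) ⟨J, hJ⟩
    by_cases hLJ : L0 = J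
    swap
    · exact ⟨L0, hL0, hLJ⟩
    subst hLJ
    obtain ⟨_, h | ⟨G, hG, hGL, hjoint⟩⟩ := hL0
    · exfalso
      have : T ⊆ {L0} := fun H hH => by simp [h H hH]
      have := Finset.card_le_card this
      simp at this; omega
    have hGe : G ∈ T.erase L0 := Finset.mem_erase.2 ⟨hGL, hG⟩
    have hce : (T.erase L0).card = n := by rw [Finset.card_erase_of_mem hJ]; omega
    by_cases h3 : 2 ≤ (T.erase L0).card
    · obtain ⟨L, ⟨hL, hL'⟩, hLG⟩ := ih _ hce (hasLeaf_mono hT (Finset.erase_subset _ _)) G hGe h3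
      rcases hL' with h | ⟨G', hG', hG'L, hj⟩
      · exact absurd (h G hGe).symm hLG
      · refine ⟨L, ⟨(Finset.mem_erase.1 hL).2, Or.inr ⟨G', (Finset.mem_erase.1 hG').2, hG'L, ?_⟩⟩,
          (Finset.mem_erase.1 hL).1⟩
        intro H hH hHL
        by_cases hHL0 : H = L0
        · subst hHL0
          have h4 := hjoint L (Finset.mem_erase.1 hL).2 (Finset.mem_erase.1 hL).1
          have h5 := hj G hGe (Ne.symm hLG)
          intro x hx
          simp only [Finset.mem_inter] at hx
          have h6 := h4 (Finset.mem_inter.2 ⟨hx.2, hx.1⟩)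
          exact h5 (Finset.mem_inter.2 ⟨hx.1, (Finset.mem_inter.1 h6).2⟩)
        · exact hj H (Finset.mem_erase.2 ⟨hHL0, hH⟩) hHL
    · have h4 : T.erase L0 = {G} := by
        apply (Finset.eq_singleton_iff_unique_mem).2
        refine ⟨hGe, fun x hx => ?_⟩
        exact Finset.card_le_one.1 (by omega) x hx G hGe
      refine ⟨G, ⟨hG, Or.inr ⟨L0, hJ, Ne.symm hGL, ?_⟩⟩, hGL⟩
      intro H hH hHG
      have : H = L0 := by
        by_contra hne
        have : H ∈ T.erase L0 := Finset.mem_erase.2 ⟨hne, hH⟩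
        rw [h4] at this
        exact hHG (Finset.mem_singleton.1 this)
      rw [this]

theorem hasLeaf_image {W : Type} [Fintype W] [DecidableEq W] {S : Finset (Finset V)}
    (h : HasLeafProp S) (f : Finset V → Finset W)
    (hf : ∀ F ∈ S, ∀ H ∈ S, ∀ G ∈ S, F ∩ H ⊆ F ∩ G → f F ∩ f H ⊆ f F ∩ f G) :
    HasLeafProp (S.image f) := by
  classical
  intro T hT hne
  have hex : ∀ E ∈ T, ∃ F ∈ S, f F = E := fun E hE => Finset.mem_image.1 (hT hE)
  choose! g hgS hg using hex
  have hTS : T.image g ⊆ S := by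
    intro F hF
    obtain ⟨E, hE, rfl⟩ := Finset.mem_image.1 hF
    exact hgS E hE
  obtain ⟨F, hF, hl⟩ := h (T.image g) hTS (hne.image g)
  obtain ⟨E, hE, rfl⟩ := Finset.mem_image.1 hF
  refine ⟨E, hE, ?_⟩
  rcases hl with hl | ⟨G, hG, hGF, hj⟩
  · left
    intro H hH
    rw [← hg H hH, ← hg E hE, hl (g H) (Finset.mem_image_of_mem g hH)]
  · right
    obtain ⟨E', hE', rfl⟩ := Finset.mem_image.1 hG
    refine ⟨E', hE', fun hh => hGF (by rw [hh]), ?_⟩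
    intro H hH hHE
    have := hf (g E) (hgS E hE) (g H) (hgS H hH) (g E') (hgS E' hE')
      (hj (g H) (Finset.mem_image_of_mem g hH) (by
        intro hh
        apply hHE
        rw [← hg H hH, hh, hg E hE]))
    rwa [hg E hE, hg H hH, hg E' hE'] at this

theorem hasLeaf_insert_empty {S : Finset (Finset V)} (h : HasLeafProp S) :
    HasLeafProp (insert ∅ S) := by
  intro T hT hne
  by_cases h0 : (T.erase ∅).Nonempty
  · have hsub : T.erase ∅ ⊆ S := by
      intro F hF
      obtain ⟨h1, h2⟩ := Finset.mem_erase.1 hF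
      exact (Finset.mem_insert.1 (hT h2)).resolve_left h1
    obtain ⟨F, hF, hl⟩ := h _ hsub h0
    obtain ⟨hF0, hFT⟩ := Finset.mem_erase.1 hF
    refine ⟨F, hFT, ?_⟩
    rcases hl with hl | ⟨G, hG, hGF, hj⟩
    · by_cases h1 : ∅ ∈ T
      · right
        refine ⟨∅, h1, Ne.symm hF0, ?_⟩
        intro H hH hHF
        by_cases hH0 : H = ∅
        · rw [hH0]
        · exact absurd (hl H (Finset.mem_erase.2 ⟨hH0, hH⟩)) hHF
      · left
        intro H hH
        exact hl H (Finset.mem_erase.2 ⟨fun hh => h1 (hh ▸ hH), hH⟩)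
    · right
      refine ⟨G, (Finset.mem_erase.1 hG).2, hGF, ?_⟩
      intro H hH hHF
      by_cases hH0 : H = ∅
      · simp [hH0]
      · exact hj H (Finset.mem_erase.2 ⟨hH0, hH⟩) hHF
  · rw [Finset.not_nonempty_iff_eq_empty] at h0
    obtain ⟨F, hF⟩ := hne
    have hall : ∀ H ∈ T, H = ∅ := by
      intro H hH
      by_contra hh
      have : H ∈ T.erase ∅ := Finset.mem_erase.2 ⟨hh, hH⟩
      rw [h0] at this
      simp at this
    exact ⟨F, hF, Or.inl fun H hH => by rw [hall H hH, hall F hF]⟩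

/-- A totally balanced family has a nest point outside any given proper edge. -/
theorem exists_nest_point (n : ℕ) : ∀ (B : Finset V), B.card = n → ∀ (E : Finset (Finset V)),
    HasLeafProp E → (∀ e ∈ E, e ⊆ B) → ∀ J ∈ E, J ≠ B →
    ∃ b ∈ B, b ∉ J ∧ ∀ e ∈ E, ∀ e' ∈ E, b ∈ e → b ∈ e' → e ⊆ e' ∨ e' ⊆ e := by
  classical
  induction n using Nat.strong_induction_on with
  | _ n ih =>
    intro B hB E hE hsub J hJ hJB
    set M : Finset (Finset V) :=
      E.filter (fun e => e ≠ B ∧ ∀ e' ∈ E, e' ≠ B → e ⊆ e' → e = e') with hM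
    have hmax : ∀ e ∈ E, e ≠ B → ∃ m ∈ M, e ⊆ m := by
      intro e he heB
      obtain ⟨m, hm, hmm⟩ := (E.filter (fun x => x ≠ B ∧ e ⊆ x)).exists_max_image Finset.card
        ⟨e, by simp [he, heB]⟩
      simp only [Finset.mem_filter] at hm
      refine ⟨m, ?_, hm.2.2⟩
      simp only [hM, Finset.mem_filter]
      refine ⟨hm.1, hm.2.1, ?_⟩
      intro e' he' he'B hme'
      have := hmm e' (by simp only [Finset.mem_filter]; exact ⟨he', he'B, hm.2.2.trans hme'⟩)
      exact Finset.eq_of_subset_of_card_le hme' this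
    have hME : M ⊆ E := Finset.filter_subset _ _
    obtain ⟨J0, hJ0, hJJ0⟩ := hmax J hJ hJB
    have hMB : ∀ m ∈ M, m ≠ B := fun m hm => (Finset.mem_filter.1 hm).2.1
    have hMmax : ∀ m ∈ M, ∀ e' ∈ E, e' ≠ B → m ⊆ e' → m = e' :=
      fun m hm => (Finset.mem_filter.1 hm).2.2
    by_cases hc : 2 ≤ M.card
    · obtain ⟨L, ⟨hL, hl⟩, hLJ⟩ := exists_leaf_ne M.card M rfl (hasLeaf_mono hE hME) J0 hJ0 hc
      rcases hl with hl | ⟨G, hG, hGL, hj⟩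
      · exact absurd (hl J0 hJ0).symm hLJ
      have hLB : L ⊂ B := lt_of_le_of_ne (hsub L (hME hL)) (hMB L hL)
      have hcard := Finset.card_lt_card hLB
      have hGLne : G ∩ L ≠ L := by
        intro hh
        have : L ⊆ G := by rw [← hh]; exact Finset.inter_subset_left
        exact hGL (hMmax L hL G (hME hG) (hMB G hG) this).symm
      have himg : HasLeafProp (E.image (fun e => e ∩ L)) := by
        apply hasLeaf_image hE
        intro F _ H _ G _ hh x hx
        simp only [Finset.mem_inter] at hx ⊢
        have := hh (Finset.mem_inter.2 ⟨hx.1.1, hx.2.1⟩)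
        simp only [Finset.mem_inter] at this
        exact ⟨⟨this.1, hx.1.2⟩, this.2, hx.1.2⟩
      obtain ⟨b, hbL, hbG, hb⟩ := ih L.card (by omega) L rfl _ himg
        (by
          intro e he
          obtain ⟨e', _, rfl⟩ := Finset.mem_image.1 he
          exact Finset.inter_subset_right)
        (G ∩ L) (Finset.mem_image_of_mem (fun e => e ∩ L) (hME hG)) hGLne
      have hbG' : b ∉ G := fun hh => hbG (Finset.mem_inter.2 ⟨hh, hbL⟩)
      have honly : ∀ m ∈ M, b ∈ m → m = L := by
        intro m hm hbm
        by_contra hne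
        exact hbG' (Finset.mem_inter.1 (hj m hm hne (Finset.mem_inter.2 ⟨hbL, hbm⟩))).2
      have hin : ∀ e ∈ E, b ∈ e → e ≠ B → e ⊆ L := by
        intro e he hbe heB
        obtain ⟨m, hm, hem⟩ := hmax e he heB
        rw [← honly m hm (hem hbe)]
        exact hem
      refine ⟨b, hLB.1 hbL, ?_, ?_⟩
      · intro hbJ
        exact hLJ (honly J0 hJ0 (hJJ0 hbJ)).symm
      · intro e he e' he' hbe hbe'
        by_cases h1 : e = B
        · right; rw [h1]; exact hsub e' he'
        by_cases h2 : e' = B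
        · left; rw [h2]; exact hsub e he
        have h3 := hin e he hbe h1
        have h4 := hin e' he' hbe' h2
        have := hb (e ∩ L) (Finset.mem_image_of_mem (fun e => e ∩ L) he)
          (e' ∩ L) (Finset.mem_image_of_mem (fun e => e ∩ L) he')
          (Finset.mem_inter.2 ⟨hbe, hbL⟩) (Finset.mem_inter.2 ⟨hbe', hbL⟩)
        rwa [Finset.inter_eq_left.2 h3, Finset.inter_eq_left.2 h4] at this
    · have honly : ∀ e ∈ E, e ≠ B → e ⊆ J0 := by
        intro e he heB
        obtain ⟨m, hm, hem⟩ := hmax e he heB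
        rwa [Finset.card_le_one.1 (by omega) m hm J0 hJ0] at hem
      have hJ0B : J0 ⊂ B := lt_of_le_of_ne (hsub J0 (hME hJ0)) (hMB J0 hJ0)
      obtain ⟨b, hbB, hbJ⟩ := Finset.exists_of_ssubset hJ0B
      refine ⟨b, hbB, fun hh => hbJ (hJJ0 hh), ?_⟩
      intro e he e' he' hbe hbe'
      left
      have : ∀ e ∈ E, b ∈ e → e = B := by
        intro e he hbe
        by_contra hne
        exact hbJ (honly e he hne hbe)
      rw [this e he hbe, this e' he' hbe']

/-- Structure of grafted collections. -/
theorem grafted_structure {S : Finset (Finset V)} (h : IsGrafted S) :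
    (∀ F ∈ S, ∀ G ∈ S, F ⊆ G → F = G) → (∀ F ∈ S, F.Nonempty) →
    ∃ P ⊆ S, (∀ F ∈ P, ∀ F' ∈ P, F ≠ F' → F ∩ F' = ∅) ∧
      (∀ H ∈ S, ∀ v ∈ H, ∃ F ∈ P, v ∈ F) ∧
      (∀ F ∈ P, ∀ H ∈ S, ∀ H' ∈ S, F ∩ H ⊆ F ∩ H' ∨ F ∩ H' ⊆ F ∩ H) := by
  classical
  induction h with
  | intro S Fs Gs hunion hdisj hcover hleaves hFdisj hrec ih =>
    intro hanti hne
    have hFS : Fs ⊆ S := by rw [hunion]; exact Finset.subset_union_left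
    refine ⟨Fs, hFS, hFdisj, ?_, ?_⟩
    · intro H hH v hv
      rw [hunion] at hH
      rcases Finset.mem_union.1 hH with h | h
      · exact ⟨H, h, hv⟩
      · exact hcover H h v hv
    · have hfree : ∀ F ∈ Fs, ∃ v ∈ F, ∀ H ∈ S, v ∈ H → H = F := by
        intro F hF
        obtain ⟨_, h | ⟨G, hG, hGF, hj⟩⟩ := (hleaves F).2 hF
        · obtain ⟨v, hv⟩ := hne F (hFS hF)
          exact ⟨v, hv, fun H hH _ => h H hH⟩
        · have hnot : ¬ F ⊆ G := fun hh => hGF (hanti F (hFS hF) G hG hh).symm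
          obtain ⟨v, hv, hvG⟩ := Finset.not_subset.1 hnot
          refine ⟨v, hv, fun H hH hvH => ?_⟩
          by_contra hHF
          exact hvG (Finset.mem_inter.1 (hj H hH hHF (Finset.mem_inter.2 ⟨hv, hvH⟩))).2
      intro F hF H hH H' hH'
      have hFsCase : ∀ X ∈ Fs, F ∩ X = ∅ ∨ F ∩ X = F := by
        intro X hX
        by_cases hXF : F = X
        · right; rw [hXF, Finset.inter_self]
        · left; exact hFdisj F hF X hX hXF
      by_cases hHF : H ∈ Fs
      · rcases hFsCase H hHF with h | h
        · left; rw [h]; exact Finset.empty_subset _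
        · right; rw [h]; exact Finset.inter_subset_left
      by_cases hHF' : H' ∈ Fs
      · rcases hFsCase H' hHF' with h | h
        · right; rw [h]; exact Finset.empty_subset _
        · left; rw [h]; exact Finset.inter_subset_left
      by_cases hex : ∃ G ∈ Gs, G ≠ H ∧ G ≠ H'
      · obtain ⟨G, hG, hGH, hGH'⟩ := hex
        obtain ⟨P, hPS, _, hPcov, hPtr⟩ := ih G hG
          (fun A hA B hB => hanti A (Finset.mem_of_mem_erase hA) B (Finset.mem_of_mem_erase hB))
          (fun A hA => hne A (Finset.mem_of_mem_erase hA))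
        have hFG : F ≠ G := fun hh => Finset.disjoint_left.1 hdisj hF (hh ▸ hG)
        obtain ⟨v, hv, hvo⟩ := hfree F hF
        obtain ⟨F', hF', hvF'⟩ := hPcov F (Finset.mem_erase.2 ⟨hFG, hFS hF⟩) v hv
        have : F' = F := hvo F' (Finset.mem_of_mem_erase (hPS hF')) hvF'
        subst this
        exact hPtr F' hF' H (Finset.mem_erase.2 ⟨Ne.symm hGH, hH⟩) H'
          (Finset.mem_erase.2 ⟨Ne.symm hGH', hH'⟩)
      · push Not at hex
        have hneH : H ≠ F := fun hh => hHF (hh ▸ hF)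
        have hneH' : H' ≠ F := fun hh => hHF' (hh ▸ hF)
        obtain ⟨_, h | ⟨G, hG, hGF, hj⟩⟩ := (hleaves F).2 hF
        · exact absurd (h H hH) hneH
        · have hG' := hG
          rw [hunion] at hG'
          rcases Finset.mem_union.1 hG' with hGFs | hGGs
          · have h0 := hFdisj F hF G hGFs (Ne.symm hGF)
            left
            have := hj H hH hneH
            rw [h0] at this
            exact this.trans (Finset.empty_subset _)
          · by_cases hGH : G = H
            · right; rw [← hGH]; exact hj H' hH' hneH'
            · left; rw [← hex G hGGs hGH]; exact hj H hH hneH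


/-! ### The combinatorial filtration -/

/-- Sets meeting `C`. -/
def UC (C : Finset V) : Set (Finset V) := {S | ∃ v ∈ C, v ∈ S}

/-- Sets containing a `k`-matching of `T`. -/
def UM (k : ℕ) (T : Finset (Finset V)) : Set (Finset V) :=
  {S | ∃ M ⊆ T, (∀ F ∈ M, ∀ G ∈ M, F ≠ G → F ∩ G = ∅) ∧ M.card = k ∧ ∀ H ∈ M, H ⊆ S}

/-- Up-sets whose Stanley-Reisner quotient is filtered by `R/P_C` with `C` of size `c`. -/
inductive FiltU : ℕ → Set (Finset V) → Prop where
  | top (c : ℕ) : FiltU c Set.univ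
  | prime (C : Finset V) : FiltU C.card (UC C)
  | split (c : ℕ) (U : Set (Finset V)) (A : Finset V) (hU : IsUpperSet U)
      (h1 : FiltU c {S | S ∪ A ∈ U}) (h2 : FiltU c (U ∪ {S | A ⊆ S})) : FiltU c U

/-- Grafted-type collections: `P` is the list of parts, `T` the collection. -/
structure St (P T : Finset (Finset V)) : Prop where
  disj : ∀ Q ∈ P, ∀ Q' ∈ P, Q ≠ Q' → Q ∩ Q' = ∅
  mem : ∀ Q ∈ P, ∃ H ∈ T, H ⊆ Q
  cover : ∀ H ∈ T, ∀ v ∈ H, ∃ Q ∈ P, v ∈ Q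
  trace : ∀ Q ∈ P, ∀ H ∈ T, ∀ H' ∈ T, Q ∩ H ⊆ Q ∩ H' ∨ Q ∩ H' ⊆ Q ∩ H
  ne : ∀ H ∈ T, H.Nonempty
  leaf : HasLeafProp T

theorem UC_upper (C : Finset V) : IsUpperSet (UC C) := by
  rintro S S' h ⟨v, hv, hvS⟩
  exact ⟨v, hv, h hvS⟩

theorem UM_upper (k : ℕ) (T : Finset (Finset V)) : IsUpperSet (UM k T) := by
  rintro S S' h ⟨M, h1, h2, h3, h4⟩
  exact ⟨M, h1, h2, h3, fun H hH => (h4 H hH).trans h⟩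

theorem sup_upper (A : Finset V) : IsUpperSet {S : Finset V | A ⊆ S} := by
  intro S S' h hA
  exact Finset.Subset.trans hA h

theorem St.meet {P T : Finset (Finset V)} (h : St P T) {Q H H' : Finset V} (hQ : Q ∈ P)
    (hH : H ∈ T) (hH' : H' ∈ T) (h1 : (Q ∩ H).Nonempty) (h2 : (Q ∩ H').Nonempty) :
    ∃ x ∈ Q, x ∈ H ∧ x ∈ H' := by
  rcases h.trace Q hQ H hH H' hH' with h3 | h3
  · obtain ⟨x, hx⟩ := h1
    have h4 := Finset.mem_inter.1 hx
    have h5 := Finset.mem_inter.1 (h3 hx)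
    exact ⟨x, h4.1, h4.2, h5.2⟩
  · obtain ⟨x, hx⟩ := h2
    have h4 := Finset.mem_inter.1 hx
    have h5 := Finset.mem_inter.1 (h3 hx)
    exact ⟨x, h4.1, h5.2, h4.2⟩

theorem St.matching_card_le {P T : Finset (Finset V)} (h : St P T) {M : Finset (Finset V)}
    (hM : M ⊆ T) (hd : ∀ F ∈ M, ∀ G ∈ M, F ≠ G → F ∩ G = ∅) : M.card ≤ P.card := by
  have hex : ∀ H ∈ M, ∃ Q ∈ P, (Q ∩ H).Nonempty := by
    intro H hH
    obtain ⟨v, hv⟩ := h.ne H (hM hH)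
    obtain ⟨Q, hQ, hvQ⟩ := h.cover H (hM hH) v hv
    exact ⟨Q, hQ, v, Finset.mem_inter.2 ⟨hvQ, hv⟩⟩
  choose! f hfP hf using hex
  apply Finset.card_le_card_of_injOn f hfP
  intro H hH H' hH' heq
  by_contra hne
  have h1 := hf H hH
  have h2 := hf H' hH'
  rw [heq] at h1
  obtain ⟨x, _, hx1, hx2⟩ := h.meet (hfP H' hH') (hM hH) (hM hH') h1 h2
  have := Finset.mem_inter.2 ⟨hx1, hx2⟩
  rw [hd H hH H' hH' hne] at this
  simp at this

theorem St.special {P T : Finset (Finset V)} (h : St P T) (hP : P.Nonempty) :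
    ∃ Q ∈ P, ∀ H ∈ T, ∀ H' ∈ T, (Q ∩ H).Nonempty → (Q ∩ H').Nonempty →
      (∀ Q' ∈ P, (Q' ∩ H).Nonempty → (Q' ∩ H').Nonempty) ∨
      (∀ Q' ∈ P, (Q' ∩ H').Nonempty → (Q' ∩ H).Nonempty) := by
  classical
  set supp : Finset V → Finset (Finset V) := fun H => P.filter (fun Q => (Q ∩ H).Nonempty)
    with hsupp
  have himg : HasLeafProp (T.image supp) := by
    apply hasLeaf_image h.leaf
    intro F hF H hH G hG hh Q hQ
    simp only [hsupp, Finset.mem_inter, Finset.mem_filter] at hQ ⊢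
    obtain ⟨⟨hQP, h1⟩, _, h2⟩ := hQ
    obtain ⟨x, hxQ, hxF, hxH⟩ := h.meet hQP hF hH h1 h2
    have h3 := Finset.mem_inter.1 (hh (Finset.mem_inter.2 ⟨hxF, hxH⟩))
    exact ⟨⟨hQP, h1⟩, hQP, x, Finset.mem_inter.2 ⟨hxQ, h3.2⟩⟩
  obtain ⟨Q, hQ, _, hb⟩ := exists_nest_point P.card P rfl _ (hasLeaf_insert_empty himg)
    (by
      intro e he
      rcases Finset.mem_insert.1 he with rfl | he
      · exact Finset.empty_subset _
      · obtain ⟨H, _, rfl⟩ := Finset.mem_image.1 he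
        exact Finset.filter_subset _ _)
    ∅ (Finset.mem_insert_self _ _) hP.ne_empty.symm
  refine ⟨Q, hQ, fun H hH H' hH' h1 h2 => ?_⟩
  rcases hb (supp H) (Finset.mem_insert_of_mem (Finset.mem_image_of_mem _ hH))
    (supp H') (Finset.mem_insert_of_mem (Finset.mem_image_of_mem _ hH'))
    (Finset.mem_filter.2 ⟨hQ, h1⟩) (Finset.mem_filter.2 ⟨hQ, h2⟩) with h3 | h3
  · left
    intro Q' hQ' h4
    exact (Finset.mem_filter.1 (h3 (Finset.mem_filter.2 ⟨hQ', h4⟩))).2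
  · right
    intro Q' hQ' h4
    exact (Finset.mem_filter.1 (h3 (Finset.mem_filter.2 ⟨hQ', h4⟩))).2

theorem not_mem_of_inter_empty {A B : Finset V} {x : V} (h : A ∩ B = ∅) (hA : x ∈ A)
    (hB : x ∈ B) : False := by
  have := Finset.mem_inter.2 ⟨hA, hB⟩
  rw [h] at this
  simp at this

theorem St.delete {P T : Finset (Finset V)} (h : St P T) {Q : Finset V} (hQ : Q ∈ P) :
    St (P.erase Q) (T.filter (fun H => Q ∩ H = ∅)) where
  disj := fun A hA B hB => h.disj A (Finset.mem_of_mem_erase hA) B (Finset.mem_of_mem_erase hB)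
  mem := by
    intro A hA
    obtain ⟨hAQ, hAP⟩ := Finset.mem_erase.1 hA
    obtain ⟨H, hH, hHA⟩ := h.mem A hAP
    refine ⟨H, Finset.mem_filter.2 ⟨hH, ?_⟩, hHA⟩
    rw [← Finset.subset_empty, ← h.disj Q hQ A hAP (Ne.symm hAQ)]
    exact Finset.inter_subset_inter_left hHA
  cover := by
    intro H hH v hv
    obtain ⟨hH, hQH⟩ := Finset.mem_filter.1 hH
    obtain ⟨A, hA, hvA⟩ := h.cover H hH v hv
    refine ⟨A, Finset.mem_erase.2 ⟨?_, hA⟩, hvA⟩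
    rintro rfl
    exact not_mem_of_inter_empty hQH hvA hv
  trace := fun A hA H hH H' hH' => h.trace A (Finset.mem_of_mem_erase hA) H
    (Finset.mem_filter.1 hH).1 H' (Finset.mem_filter.1 hH').1
  ne := fun H hH => h.ne H (Finset.mem_filter.1 hH).1
  leaf := hasLeaf_mono h.leaf (Finset.filter_subset _ _)

theorem St.contract {P T : Finset (Finset V)} (h : St P T) {Q : Finset V} (hQ : Q ∈ P)
    {T1 : Finset (Finset V)} (hT1 : T1 ⊆ T) (hne : ∀ H ∈ T1, (H \ Q).Nonempty)
    (hmem : ∀ H ∈ T, Q ∩ H = ∅ → H ∈ T1) :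
    St (P.erase Q) (T1.image (fun H => H \ Q)) where
  disj := fun A hA B hB => h.disj A (Finset.mem_of_mem_erase hA) B (Finset.mem_of_mem_erase hB)
  mem := by
    intro A hA
    obtain ⟨hAQ, hAP⟩ := Finset.mem_erase.1 hA
    obtain ⟨H, hH, hHA⟩ := h.mem A hAP
    have hQH : Q ∩ H = ∅ := by
      rw [← Finset.subset_empty, ← h.disj Q hQ A hAP (Ne.symm hAQ)]
      exact Finset.inter_subset_inter_left hHA
    exact ⟨H \ Q, Finset.mem_image_of_mem _ (hmem H hH hQH), Finset.sdiff_subset.trans hHA⟩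
  cover := by
    intro E hE v hv
    obtain ⟨H, hH, rfl⟩ := Finset.mem_image.1 hE
    obtain ⟨hvH, hvQ⟩ := Finset.mem_sdiff.1 hv
    obtain ⟨A, hA, hvA⟩ := h.cover H (hT1 hH) v hvH
    refine ⟨A, Finset.mem_erase.2 ⟨?_, hA⟩, hvA⟩
    rintro rfl
    exact hvQ hvA
  trace := by
    intro A hA E hE E' hE'
    obtain ⟨hAQ, hAP⟩ := Finset.mem_erase.1 hA
    obtain ⟨H, hH, rfl⟩ := Finset.mem_image.1 hE
    obtain ⟨H', hH', rfl⟩ := Finset.mem_image.1 hE'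
    have key : ∀ X Y : Finset V, A ∩ X ⊆ A ∩ Y → A ∩ (X \ Q) ⊆ A ∩ (Y \ Q) := by
      intro X Y hXY x hx
      simp only [Finset.mem_inter, Finset.mem_sdiff] at hx ⊢
      have := hXY (Finset.mem_inter.2 ⟨hx.1, hx.2.1⟩)
      exact ⟨hx.1, (Finset.mem_inter.1 this).2, hx.2.2⟩
    rcases h.trace A hAP H (hT1 hH) H' (hT1 hH') with h1 | h1
    · exact Or.inl (key _ _ h1)
    · exact Or.inr (key _ _ h1)
  ne := by
    intro E hE
    obtain ⟨H, hH, rfl⟩ := Finset.mem_image.1 hE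
    exact hne H hH
  leaf := by
    apply hasLeaf_image (hasLeaf_mono h.leaf hT1)
    intro F _ H _ G _ hh x hx
    simp only [Finset.mem_inter, Finset.mem_sdiff] at hx ⊢
    have := hh (Finset.mem_inter.2 ⟨hx.1.1, hx.2.1⟩)
    simp only [Finset.mem_inter] at this
    exact ⟨hx.1, this.2, hx.1.2⟩

theorem colon_leaf {P T : Finset (Finset V)} (h : St P T) {Q F : Finset V} (hQ : Q ∈ P)
    (hF : F ∈ T) (hFQ : F ⊆ Q) (Z : Finset V) (hZ : ∀ v ∈ Z, ∀ Q ∈ P, v ∉ Q) (k : ℕ) :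
    {S | S ∪ F ∈ UC Z ∪ UM (k + 1) T} = UC Z ∪ UM k (T.filter (fun H => Q ∩ H = ∅)) := by
  classical
  ext S
  constructor
  · rintro (⟨z, hz, hzS⟩ | ⟨M, hMT, hMd, hMc, hMS⟩)
    · left
      refine ⟨z, hz, ?_⟩
      rcases Finset.mem_union.1 hzS with h1 | h1
      · exact h1
      · exact absurd (hFQ h1) (hZ z hz Q hQ)
    · right
      have hone : (M.filter (fun H => ¬ Q ∩ H = ∅)).card ≤ 1 := by
        apply Finset.card_le_one.2
        intro H hH H' hH'
        obtain ⟨hH1, hH2⟩ := Finset.mem_filter.1 hH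
        obtain ⟨hH1', hH2'⟩ := Finset.mem_filter.1 hH'
        by_contra hne
        obtain ⟨x, _, hx1, hx2⟩ := h.meet hQ (hMT hH1) (hMT hH1')
          (Finset.nonempty_iff_ne_empty.2 hH2) (Finset.nonempty_iff_ne_empty.2 hH2')
        exact not_mem_of_inter_empty (hMd H hH1 H' hH1' hne) hx1 hx2
      have hsum := Finset.card_filter_add_card_filter_not (s := M) (fun H => Q ∩ H = ∅)
      obtain ⟨M', hM', hM'c⟩ := Finset.exists_subset_card_eq
        (s := M.filter (fun H => Q ∩ H = ∅)) (n := k) (by omega)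
      refine ⟨M', ?_, ?_, hM'c, ?_⟩
      · intro H hH
        obtain ⟨h1, h2⟩ := Finset.mem_filter.1 (hM' hH)
        exact Finset.mem_filter.2 ⟨hMT h1, h2⟩
      · intro A hA B hB
        exact hMd A (Finset.mem_filter.1 (hM' hA)).1 B (Finset.mem_filter.1 (hM' hB)).1
      · intro H hH x hx
        obtain ⟨h1, h2⟩ := Finset.mem_filter.1 (hM' hH)
        rcases Finset.mem_union.1 (hMS H h1 hx) with h3 | h3
        · exact h3
        · exact (not_mem_of_inter_empty h2 (hFQ h3) hx).elim
  · rintro (⟨z, hz, hzS⟩ | ⟨M, hMT, hMd, hMc, hMS⟩)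
    · left
      exact ⟨z, hz, Finset.mem_union_left _ hzS⟩
    · right
      have hFH : ∀ H ∈ M, F ∩ H = ∅ := by
        intro H hH
        rw [← Finset.subset_empty, ← (Finset.mem_filter.1 (hMT hH)).2]
        exact Finset.inter_subset_inter_right hFQ
      have hFM : F ∉ M := by
        intro hh
        have := hFH F hh
        rw [Finset.inter_self] at this
        exact (h.ne F hF).ne_empty this
      refine ⟨insert F M, ?_, ?_, ?_, ?_⟩
      · intro H hH
        rcases Finset.mem_insert.1 hH with rfl | hH
        · exact hF
        · exact (Finset.mem_filter.1 (hMT hH)).1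
      · intro A hA B hB hAB
        rcases Finset.mem_insert.1 hA with hA1 | hA1
        · rcases Finset.mem_insert.1 hB with hB1 | hB1
          · exact absurd (hA1.trans hB1.symm) hAB
          · rw [hA1]; exact hFH B hB1
        · rcases Finset.mem_insert.1 hB with hB1 | hB1
          · rw [hB1, Finset.inter_comm]; exact hFH A hA1
          · exact hMd A hA1 B hB1 hAB
      · rw [Finset.card_insert_of_notMem hFM, hMc]
      · intro H hH
        rcases Finset.mem_insert.1 hH with rfl | hH
        · exact Finset.subset_union_right
        · exact (hMS H hH).trans Finset.subset_union_left

/-- Colon by `A \ v`. -/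
theorem colon_init {P T0 : Finset (Finset V)} {Q A : Finset V} {v : V}
    (hAQ : A ⊆ Q) (hv : v ∈ A) (hinit : ∀ H ∈ T0, Q ∩ H ⊆ A ∨ A ⊆ H)
    (hvA : ∀ H ∈ T0, v ∈ H → A ⊆ H) (hne : ∀ H ∈ T0, (H \ Q).Nonempty)
    (hsp : ∀ H ∈ T0, ∀ H' ∈ T0, (Q ∩ H).Nonempty → (Q ∩ H').Nonempty → ∃ z ∈ H, z ∈ H' ∧ z ∉ Q)
    (hQ : Q ∈ P)
    (Z : Finset V) (hZ : ∀ v ∈ Z, ∀ Q ∈ P, v ∉ Q) (k : ℕ) :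
    {S | S ∪ A.erase v ∈ UC Z ∪ UM k T0 ∪ {S | A ⊆ S}} =
      UC (insert v Z) ∪ UM k ((T0.filter (fun H => v ∉ H)).image (fun H => H \ Q)) := by
  classical
  ext S
  constructor
  · rintro ((⟨z, hz, hzS⟩ | ⟨M, hMT, hMd, hMc, hMS⟩) | hAS)
    · left
      refine ⟨z, Finset.mem_insert_of_mem hz, ?_⟩
      rcases Finset.mem_union.1 hzS with h1 | h1
      · exact h1
      · exact absurd (hAQ (Finset.mem_of_mem_erase h1)) (hZ z hz Q hQ)
    · by_cases hvS : v ∈ S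
      · left; exact ⟨v, Finset.mem_insert_self _ _, hvS⟩
      right
      have hvM : ∀ H ∈ M, v ∉ H := by
        intro H hH hvH
        rcases Finset.mem_union.1 (hMS H hH hvH) with h1 | h1
        · exact hvS h1
        · exact (Finset.mem_erase.1 h1).1 rfl
      refine ⟨M.image (fun H => H \ Q), ?_, ?_, ?_, ?_⟩
      · intro E hE
        obtain ⟨H, hH, rfl⟩ := Finset.mem_image.1 hE
        exact Finset.mem_image_of_mem (fun H => H \ Q)
          (Finset.mem_filter.2 ⟨hMT hH, hvM H hH⟩)
      · intro E hE E' hE' hEE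
        obtain ⟨H, hH, rfl⟩ := Finset.mem_image.1 hE
        obtain ⟨H', hH', rfl⟩ := Finset.mem_image.1 hE'
        have hHH : H ≠ H' := fun hh => hEE (by rw [hh])
        rw [← Finset.subset_empty, ← hMd H hH H' hH' hHH]
        exact Finset.inter_subset_inter Finset.sdiff_subset Finset.sdiff_subset
      · rw [Finset.card_image_of_injOn, hMc]
        intro H hH H' hH' heq
        by_contra hHH
        obtain ⟨x, hx⟩ := hne H (hMT hH)
        have hx' := hx
        simp only at heq
        rw [heq] at hx'
        exact not_mem_of_inter_empty (hMd H hH H' hH' hHH) (Finset.mem_sdiff.1 hx).1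
          (Finset.mem_sdiff.1 hx').1
      · intro E hE x hx
        obtain ⟨H, hH, rfl⟩ := Finset.mem_image.1 hE
        obtain ⟨hxH, hxQ⟩ := Finset.mem_sdiff.1 hx
        rcases Finset.mem_union.1 (hMS H hH hxH) with h1 | h1
        · exact h1
        · exact absurd (hAQ (Finset.mem_of_mem_erase h1)) hxQ
    · left
      refine ⟨v, Finset.mem_insert_self _ _, ?_⟩
      rcases Finset.mem_union.1 (hAS hv) with h1 | h1
      · exact h1
      · exact absurd rfl (Finset.mem_erase.1 h1).1
  · rintro (⟨z, hz, hzS⟩ | ⟨M, hMT, hMd, hMc, hMS⟩)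
    · rcases Finset.mem_insert.1 hz with rfl | hz
      · right
        intro x hx
        by_cases hxz : x = z
        · exact Finset.mem_union_left _ (hxz ▸ hzS)
        · exact Finset.mem_union_right _ (Finset.mem_erase.2 ⟨hxz, hx⟩)
      · left; left
        exact ⟨z, hz, Finset.mem_union_left _ hzS⟩
    · left; right
      have hex : ∀ E ∈ M, ∃ H ∈ T0, v ∉ H ∧ H \ Q = E := by
        intro E hE
        obtain ⟨H, hH, rfl⟩ := Finset.mem_image.1 (hMT hE)
        obtain ⟨h1, h2⟩ := Finset.mem_filter.1 hH
        exact ⟨H, h1, h2, rfl⟩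
      choose! g hgT hgv hg using hex
      refine ⟨M.image g, ?_, ?_, ?_, ?_⟩
      · intro H hH
        obtain ⟨E, hE, rfl⟩ := Finset.mem_image.1 hH
        exact hgT E hE
      · intro H hH H' hH' hHH
        obtain ⟨E, hE, rfl⟩ := Finset.mem_image.1 hH
        obtain ⟨E', hE', rfl⟩ := Finset.mem_image.1 hH'
        have hEE : E ≠ E' := fun hh => hHH (by rw [hh])
        have hout : ∀ z, z ∈ g E → z ∈ g E' → z ∉ Q → False := by
          intro z hz hz' hzQ
          apply not_mem_of_inter_empty (hMd E hE E' hE' hEE) (x := z)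
          · rw [← hg E hE]; exact Finset.mem_sdiff.2 ⟨hz, hzQ⟩
          · rw [← hg E' hE']; exact Finset.mem_sdiff.2 ⟨hz', hzQ⟩
        by_contra hcon
        obtain ⟨x, hx⟩ := Finset.nonempty_iff_ne_empty.2 hcon
        obtain ⟨hx1, hx2⟩ := Finset.mem_inter.1 hx
        by_cases hxQ : x ∈ Q
        · obtain ⟨z, hz, hz', hzQ⟩ := hsp _ (hgT E hE) _ (hgT E' hE')
            ⟨x, Finset.mem_inter.2 ⟨hxQ, hx1⟩⟩ ⟨x, Finset.mem_inter.2 ⟨hxQ, hx2⟩⟩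
          exact hout z hz hz' hzQ
        · exact hout x hx1 hx2 hxQ
      · rw [Finset.card_image_of_injOn, hMc]
        intro E hE E' hE' heq
        rw [← hg E hE, ← hg E' hE', heq]
      · intro H hH x hx
        obtain ⟨E, hE, rfl⟩ := Finset.mem_image.1 hH
        by_cases hxQ : x ∈ Q
        · apply Finset.mem_union_right
          rcases hinit _ (hgT E hE) with h1 | h1
          · refine Finset.mem_erase.2 ⟨?_, h1 (Finset.mem_inter.2 ⟨hxQ, hx⟩)⟩
            rintro rfl
            exact hgv E hE hx
          · exact absurd (h1 hv) (hgv E hE)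
        · apply Finset.mem_union_left
          apply hMS E hE
          rw [← hg E hE]
          exact Finset.mem_sdiff.2 ⟨hx, hxQ⟩

theorem filt_main (n : ℕ) : ∀ (P T : Finset (Finset V)), P.card = n → St P T →
    ∀ (k : ℕ) (Z : Finset V), k ≤ n + 1 → (∀ v ∈ Z, ∀ Q ∈ P, v ∉ Q) →
    FiltU (n + 1 - k + Z.card) (UC Z ∪ UM k T) := by
  classical
  induction n with
  | zero =>
    intro P T hP h k Z hk hZ
    rcases Nat.eq_zero_or_pos k with rfl | hk0
    · have : UC Z ∪ UM 0 T = Set.univ := by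
        ext S
        simp only [Set.mem_univ, iff_true]
        right
        exact ⟨∅, by simp, by simp, by simp, by simp⟩
      rw [this]; exact FiltU.top _
    · have : UC Z ∪ UM k T = UC Z := by
        apply Set.union_eq_self_of_subset_right
        rintro S ⟨M, hM, hd, hc, _⟩
        have := h.matching_card_le hM hd
        omega
      have hk1 : 0 + 1 - k + Z.card = Z.card := by omega
      rw [this, hk1]
      exact FiltU.prime Z
  | succ n ih =>
    intro P T hP h k Z hk hZ
    rcases Nat.eq_zero_or_pos k with rfl | hk0
    · have : UC Z ∪ UM 0 T = Set.univ := by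
        ext S
        simp only [Set.mem_univ, iff_true]
        right
        exact ⟨∅, by simp, by simp, by simp, by simp⟩
      rw [this]; exact FiltU.top _
    obtain ⟨k, rfl⟩ : ∃ j, k = j + 1 := ⟨k - 1, by omega⟩
    by_cases hkn : k = n + 1
    · have : UC Z ∪ UM (k + 1) T = UC Z := by
        apply Set.union_eq_self_of_subset_right
        rintro S ⟨M, hM, hd, hc, _⟩
        have := h.matching_card_le hM hd
        omega
      have hk1 : n + 1 + 1 - (k + 1) + Z.card = Z.card := by omega
      rw [this, hk1]
      exact FiltU.prime Z
    obtain ⟨Q, hQ, hspec⟩ := h.special (Finset.card_pos.1 (by omega))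
    have hPe : (P.erase Q).card = n := by rw [Finset.card_erase_of_mem hQ]; omega
    -- the smallest member inside `Q`
    obtain ⟨F, hF, hFmin⟩ : ∃ F ∈ T.filter (fun H => H ⊆ Q),
        ∀ H ∈ T.filter (fun H => H ⊆ Q), F.card ≤ H.card := by
      apply Finset.exists_min_image
      obtain ⟨H, hH, hHQ⟩ := h.mem Q hQ
      exact ⟨H, Finset.mem_filter.2 ⟨hH, hHQ⟩⟩
    obtain ⟨hFT, hFQ⟩ := Finset.mem_filter.1 hF
    have hFsub : ∀ H ∈ T, H ⊆ Q → F ⊆ H := by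
      intro H hH hHQ
      have := h.trace Q hQ F hFT H hH
      rw [Finset.inter_eq_right.2 hFQ, Finset.inter_eq_right.2 hHQ] at this
      rcases this with h1 | h1
      · exact h1
      · exact (Finset.eq_of_subset_of_card_le h1
          (hFmin H (Finset.mem_filter.2 ⟨hH, hHQ⟩))).symm.subset
    have hup : IsUpperSet (UC Z ∪ UM (k + 1) T) := (UC_upper Z).union (UM_upper _ T)
    have hZe : ∀ v ∈ Z, ∀ Q' ∈ P.erase Q, v ∉ Q' :=
      fun v hv Q' hQ' => hZ v hv Q' (Finset.mem_of_mem_erase hQ')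
    apply FiltU.split _ _ F hup
    · rw [colon_leaf h hQ hFT hFQ Z hZ k]
      have := ih _ _ hPe (h.delete hQ) k Z (by omega) hZe
      have hk1 : n + 1 + 1 - (k + 1) + Z.card = n + 1 - k + Z.card := by omega
      rw [hk1]
      exact this
    · set T0 := T.filter (fun H => ¬ F ⊆ H) with hT0
      have hT0T : T0 ⊆ T := Finset.filter_subset _ _
      have hsum : UC Z ∪ UM (k + 1) T ∪ {S | F ⊆ S} = UC Z ∪ UM (k + 1) T0 ∪ {S | F ⊆ S} := by
        ext S
        constructor
        · rintro ((hS | ⟨M, hMT, hMd, hMc, hMS⟩) | hS)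
          · exact Or.inl (Or.inl hS)
          · by_cases hex : ∃ H ∈ M, F ⊆ H
            · obtain ⟨H, hH, hFH⟩ := hex
              exact Or.inr (Finset.Subset.trans hFH (hMS H hH))
            · push Not at hex
              exact Or.inl (Or.inr ⟨M, fun H hH => Finset.mem_filter.2 ⟨hMT hH, hex H hH⟩,
                hMd, hMc, hMS⟩)
          · exact Or.inr hS
        · rintro ((hS | ⟨M, hMT, hMd, hMc, hMS⟩) | hS)
          · exact Or.inl (Or.inl hS)
          · exact Or.inl (Or.inr ⟨M, hMT.trans hT0T, hMd, hMc, hMS⟩)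
          · exact Or.inr hS
      rw [hsum]
      have hne : ∀ H ∈ T0, (H \ Q).Nonempty := by
        intro H hH
        obtain ⟨h1, h2⟩ := Finset.mem_filter.1 hH
        rw [Finset.sdiff_nonempty]
        intro hHQ
        exact h2 (hFsub H h1 hHQ)
      have hsp : ∀ H ∈ T0, ∀ H' ∈ T0, (Q ∩ H).Nonempty → (Q ∩ H').Nonempty →
          ∃ z ∈ H, z ∈ H' ∧ z ∉ Q := by
        have key : ∀ H ∈ T0, ∀ H' ∈ T0,
            (∀ Q' ∈ P, (Q' ∩ H).Nonempty → (Q' ∩ H').Nonempty) → ∃ z ∈ H, z ∈ H' ∧ z ∉ Q := by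
          intro H hH H' hH' hh
          obtain ⟨y, hy⟩ := hne H hH
          obtain ⟨hyH, hyQ⟩ := Finset.mem_sdiff.1 hy
          obtain ⟨Q', hQ', hyQ'⟩ := h.cover H (hT0T hH) y hyH
          have hQQ : Q' ≠ Q := by rintro rfl; exact hyQ hyQ'
          have h1 : (Q' ∩ H).Nonempty := ⟨y, Finset.mem_inter.2 ⟨hyQ', hyH⟩⟩
          obtain ⟨z, hzQ', hz, hz'⟩ := h.meet hQ' (hT0T hH) (hT0T hH') h1 (hh Q' hQ' h1)
          exact ⟨z, hz, hz', fun hzQ =>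
            not_mem_of_inter_empty (h.disj Q' hQ' Q hQ hQQ) hzQ' hzQ⟩
        intro H hH H' hH' h1 h2
        rcases hspec H (hT0T hH) H' (hT0T hH') h1 h2 with h3 | h3
        · exact key H hH H' hH' h3
        · obtain ⟨z, hz, hz', hzQ⟩ := key H' hH' H hH h3
          exact ⟨z, hz', hz, hzQ⟩
      have main : ∀ m : ℕ, ∀ A : Finset V, A.card = m → A ⊆ F →
          (∀ H ∈ T0, Q ∩ H ⊆ A ∨ A ⊆ H) →
          FiltU (n + 1 + 1 - (k + 1) + Z.card) (UC Z ∪ UM (k + 1) T0 ∪ {S | A ⊆ S}) := by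
        intro m
        induction m with
        | zero =>
          intro A hA _ _
          rw [Finset.card_eq_zero] at hA
          subst hA
          have : UC Z ∪ UM (k + 1) T0 ∪ {S | ∅ ⊆ S} = Set.univ := by
            ext S; simp
          rw [this]; exact FiltU.top _
        | succ m ihm =>
          intro A hA hAF hinit
          obtain ⟨v, hvA, hv⟩ : ∃ v ∈ A, ∀ H ∈ T0, v ∈ H → A ⊆ H := by
            by_cases hex : (T0.filter (fun H => ¬ A ⊆ H)).Nonempty
            · obtain ⟨H1, hH1, hmax⟩ := Finset.exists_max_image _ (fun H => (Q ∩ H).card) hex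
              obtain ⟨hH1, hAH1⟩ := Finset.mem_filter.1 hH1
              obtain ⟨v, hvA, hvH1⟩ := Finset.not_subset.1 hAH1
              refine ⟨v, hvA, fun H hH hvH => ?_⟩
              by_contra hAH
              have hvQ : v ∈ Q ∩ H := Finset.mem_inter.2 ⟨hFQ (hAF hvA), hvH⟩
              have hle := hmax H (Finset.mem_filter.2 ⟨hH, hAH⟩)
              have hsub : Q ∩ H ⊆ Q ∩ H1 := by
                rcases h.trace Q hQ H (hT0T hH) H1 (hT0T hH1) with h1 | h1
                · exact h1
                · exact (Finset.eq_of_subset_of_card_le h1 hle).symm.subset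
              exact hvH1 (Finset.mem_inter.1 (hsub hvQ)).2
            · obtain ⟨v, hv⟩ : A.Nonempty := Finset.card_pos.1 (by omega)
              refine ⟨v, hv, fun H hH _ => ?_⟩
              by_contra hAH
              exact hex ⟨H, Finset.mem_filter.2 ⟨hH, hAH⟩⟩
          apply FiltU.split _ _ (A.erase v)
            (((UC_upper Z).union (UM_upper _ T0)).union (sup_upper A))
          · rw [colon_init (hAF.trans hFQ) hvA hinit hv hne hsp hQ Z hZ (k + 1)]
            have hvZ : v ∉ Z := fun hh => hZ v hh Q hQ (hFQ (hAF hvA))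
            have hst := h.contract hQ (T1 := T0.filter (fun H => v ∉ H))
              ((Finset.filter_subset _ _).trans hT0T)
              (fun H hH => hne H (Finset.mem_filter.1 hH).1)
              (by
                intro H hH hQH
                refine Finset.mem_filter.2 ⟨Finset.mem_filter.2 ⟨hH, ?_⟩, ?_⟩
                · intro hFH
                  obtain ⟨x, hx⟩ := h.ne F hFT
                  exact not_mem_of_inter_empty hQH (hFQ hx) (hFH hx)
                · intro hvH
                  exact not_mem_of_inter_empty hQH (hFQ (hAF hvA)) hvH)
            have := ih _ _ hPe hst (k + 1) (insert v Z) (by omega) (by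
              intro w hw Q' hQ'
              obtain ⟨h1, h2⟩ := Finset.mem_erase.1 hQ'
              rcases Finset.mem_insert.1 hw with rfl | hw
              · intro hwQ'
                exact not_mem_of_inter_empty (h.disj Q' h2 Q hQ h1) hwQ' (hFQ (hAF hvA))
              · exact hZ w hw Q' h2)
            rw [Finset.card_insert_of_notMem hvZ] at this
            have hk1 : n + 1 + 1 - (k + 1) + Z.card = n + 1 - (k + 1) + (Z.card + 1) := by omega
            rw [hk1]
            exact this
          · have hsum2 : UC Z ∪ UM (k + 1) T0 ∪ {S | A ⊆ S} ∪ {S | A.erase v ⊆ S} =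
                UC Z ∪ UM (k + 1) T0 ∪ {S | A.erase v ⊆ S} := by
              rw [Set.union_assoc]
              congr 1
              apply Set.union_eq_self_of_subset_left
              intro S hS
              exact (Finset.erase_subset _ _).trans hS
            rw [hsum2]
            apply ihm (A.erase v) (by rw [Finset.card_erase_of_mem hvA]; omega)
              ((Finset.erase_subset _ _).trans hAF)
            intro H hH
            by_cases hvH : v ∈ H
            · right
              exact (Finset.erase_subset _ _).trans (hv H hH hvH)
            · rcases hinit H hH with h1 | h1
              · left
                intro x hx
                refine Finset.mem_erase.2 ⟨?_, h1 hx⟩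
                rintro rfl
                exact hvH (Finset.mem_inter.1 hx).2
              · exact absurd (h1 hvA) hvH
      apply main F.card F rfl (Finset.Subset.refl _)
      intro H hH
      have := h.trace Q hQ F hFT H (hT0T hH)
      rw [Finset.inter_eq_right.2 hFQ] at this
      rcases this with h1 | h1
      · right; exact h1.trans Finset.inter_subset_right
      · left; exact h1


/-! ### Square-free monomial ideals from up-sets -/

/-- Exponent vector of a set. -/
noncomputable def ind (A : Finset V) : V →₀ ℕ := ∑ v ∈ A, Finsupp.single v 1

theorem ind_apply (A : Finset V) (v : V) : ind A v = if v ∈ A then 1 else 0 := by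
  classical
  simp [ind, Finsupp.finset_sum_apply, Finsupp.single_apply]

theorem ind_support (A : Finset V) : (ind A).support = A := by
  ext v
  simp [ind_apply]

theorem xMon_eq (A : Finset V) : xMon K A = monomial (ind A) (1 : K) := by
  rw [xMon, ind, MvPolynomial.monomial_sum_one]
  rfl

/-- The monomial ideal attached to an up-set. -/
noncomputable def sqI (U : Set (Finset V)) : Ideal (MvPolynomial V K) :=
  Ideal.span (Set.image (fun s => monomial s (1 : K)) {s : V →₀ ℕ | s.support ∈ U})

theorem mem_sqI {U : Set (Finset V)} (hU : IsUpperSet U) (p : MvPolynomial V K) :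
    p ∈ sqI K U ↔ ∀ m ∈ p.support, m.support ∈ U := by
  rw [sqI, MvPolynomial.mem_ideal_span_monomial_image]
  constructor
  · intro h m hm
    obtain ⟨s, hs, hsm⟩ := h m hm
    exact hU (Finsupp.support_mono hsm) hs
  · intro h m hm
    exact ⟨m, h m hm, le_rfl⟩

theorem monomial_mem_sqI {U : Set (Finset V)} (hU : IsUpperSet U) (s : V →₀ ℕ) :
    monomial s (1 : K) ∈ sqI K U ↔ s.support ∈ U := by
  classical
  rw [mem_sqI K hU]
  constructor
  · intro h
    exact h s (by simp [MvPolynomial.mem_support_iff])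
  · intro h m hm
    have := MvPolynomial.support_monomial_subset hm
    rw [Finset.mem_singleton.1 this]
    exact h

theorem ind_add_support (A : Finset V) (m : V →₀ ℕ) : (ind A + m).support = m.support ∪ A := by
  ext v
  simp [ind_apply]
  tauto

theorem colon_upper {U : Set (Finset V)} (hU : IsUpperSet U) (A : Finset V) :
    IsUpperSet {S | S ∪ A ∈ U} := by
  intro S S' h hS
  exact hU (Finset.union_subset_union_left h) hS

theorem sqI_colon {U : Set (Finset V)} (hU : IsUpperSet U) (A : Finset V)
    (q : MvPolynomial V K) : xMon K A * q ∈ sqI K U ↔ q ∈ sqI K {S | S ∪ A ∈ U} := by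
  classical
  rw [mem_sqI K hU, mem_sqI K (colon_upper hU A), xMon_eq]
  constructor
  · intro h m hm
    have h1 : ind A + m ∈ (monomial (ind A) (1 : K) * q).support := by
      rw [MvPolynomial.mem_support_iff, MvPolynomial.coeff_monomial_mul]
      simpa [MvPolynomial.mem_support_iff] using hm
    have h2 := h _ h1
    rw [ind_add_support] at h2
    exact h2
  · intro h m hm
    rw [MvPolynomial.mem_support_iff, MvPolynomial.coeff_monomial_mul'] at hm
    split_ifs at hm with hle
    · have h1 : m - ind A ∈ q.support := by
        rw [MvPolynomial.mem_support_iff]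
        simpa using hm
      have h2 := h _ h1
      have h3 : ind A + (m - ind A) = m := add_tsub_cancel_of_le hle
      rw [← h3, ind_add_support]
      exact h2
    · exact absurd rfl hm

theorem sqI_mono {U U' : Set (Finset V)} (h : U ⊆ U') : sqI K U ≤ sqI K U' := by
  apply Ideal.span_mono
  apply Set.image_mono
  intro s hs
  exact h hs

theorem sqI_sup (U : Set (Finset V)) (A : Finset V) :
    sqI K U ⊔ Ideal.span {xMon K A} = sqI K (U ∪ {S | A ⊆ S}) := by
  classical
  apply le_antisymm
  · apply sup_le (sqI_mono K Set.subset_union_left)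
    rw [Ideal.span_singleton_le_iff_mem, xMon_eq]
    apply Ideal.subset_span
    refine ⟨ind A, Or.inr ?_, rfl⟩
    rw [Set.mem_setOf_eq, ind_support]
  · rw [sqI, Ideal.span_le]
    rintro _ ⟨s, hs | hs, rfl⟩
    · exact Ideal.mem_sup_left (Ideal.subset_span ⟨s, hs, rfl⟩)
    · apply Ideal.mem_sup_right
      rw [Ideal.mem_span_singleton, xMon_eq]
      have hle : ind A ≤ s := by
        intro v
        rw [ind_apply]
        split_ifs with hv
        · have := hs hv
          rw [Finsupp.mem_support_iff] at this
          omega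
        · omega
      refine ⟨monomial (s - ind A) 1, ?_⟩
      rw [MvPolynomial.monomial_mul, add_tsub_cancel_of_le hle, one_mul]

theorem sqI_univ : sqI K (Set.univ : Set (Finset V)) = ⊤ := by
  rw [Ideal.eq_top_iff_one, mem_sqI K isUpperSet_univ]
  intros; trivial

theorem filt_upper {c : ℕ} {U : Set (Finset V)} (h : FiltU c U) : IsUpperSet U := by
  cases h with
  | top => exact isUpperSet_univ
  | prime C => exact UC_upper C
  | split _ _ _ hU => exact hU

/-! ### Iterated nonzerodivisors -/

/-- `L` is a weakly regular sequence modulo `I`. -/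
def WR {R : Type} [CommRing R] : List R → Ideal R → Prop
  | [], _ => True
  | f :: L, I => (∀ p, f * p ∈ I → p ∈ I) ∧ WR L (I ⊔ Ideal.span {f})

theorem WR_top {R : Type} [CommRing R] (L : List R) : WR L (⊤ : Ideal R) := by
  induction L with
  | nil => trivial
  | cons f L ih => 
    refine ⟨fun _ _ => trivial, ?_⟩
    rw [top_sup_eq]; exact ih

theorem mem_sup_span {R : Type} [CommRing R] {I : Ideal R} {f x : R} :
    x ∈ I ⊔ Ideal.span {f} ↔ ∃ i ∈ I, ∃ t, x = i + f * t := by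
  rw [Submodule.mem_sup]
  constructor
  · rintro ⟨i, hi, z, hz, rfl⟩
    obtain ⟨t, rfl⟩ := Ideal.mem_span_singleton'.1 hz
    exact ⟨i, hi, t, by ring⟩
  · rintro ⟨i, hi, t, rfl⟩
    exact ⟨i, hi, f * t, Ideal.mem_span_singleton'.2 ⟨t, by ring⟩, rfl⟩

theorem WR_split {R : Type} [CommRing R] (a : R) (L : List R) : ∀ (I Ic : Ideal R),
    (∀ q, a * q ∈ I ↔ q ∈ Ic) → WR L Ic → WR L (I ⊔ Ideal.span {a}) → WR L I := by
  induction L with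
  | nil => intros; trivial
  | cons f L ih =>
    rintro I Ic hc ⟨h1, h2⟩ ⟨h3, h4⟩
    refine ⟨?_, ?_⟩
    · intro p hp
      have hp1 := h3 p (Ideal.mem_sup_left hp)
      obtain ⟨i, hi, t, rfl⟩ := mem_sup_span.1 hp1
      have hft : a * (f * t) ∈ I := by
        have : a * (f * t) = f * (i + a * t) - f * i := by ring
        rw [this]
        exact I.sub_mem hp (I.mul_mem_left _ hi)
      have := h1 t ((hc _).1 hft)
      exact I.add_mem hi ((hc t).2 this)
    · apply ih _ (Ic ⊔ Ideal.span {f}) _ h2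
      · rw [sup_right_comm]; exact h4
      · intro q
        constructor
        · intro hq
          obtain ⟨i, hi, s, hs⟩ := mem_sup_span.1 hq
          have hs1 : f * s ∈ I ⊔ Ideal.span {a} := by
            rw [mem_sup_span]
            exact ⟨-i, I.neg_mem hi, q, by rw [hs]; ring⟩
          obtain ⟨i', hi', t, ht⟩ := mem_sup_span.1 (h3 s hs1)
          have h5 : a * (q - f * t) ∈ I := by
            have : a * (q - f * t) = i + f * i' := by
              rw [mul_sub, hs, ht]; ring
            rw [this]
            exact I.add_mem hi (I.mul_mem_left _ hi')
          rw [mem_sup_span]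
          exact ⟨q - f * t, (hc _).1 h5, t, by ring⟩
        · intro hq
          obtain ⟨i, hi, t, rfl⟩ := mem_sup_span.1 hq
          rw [mem_sup_span]
          exact ⟨a * i, (hc i).2 hi, a * t, by ring⟩

/-- The sequence `e_d, …, e_1`. -/
noncomputable def eL (V : Type) [Fintype V] [DecidableEq V] (K : Type) [Field K] :
    ℕ → List (MvPolynomial V K)
  | 0 => []
  | d + 1 => esymm V K (d + 1) :: eL V K d

theorem filt_coprime (D : Finset V) : ∀ C : Finset V, Disjoint D C →
    FiltU (C.card + 1) (UC C ∪ {S | D ⊆ S}) := by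
  classical
  induction D using Finset.induction_on with
  | empty =>
    intro C _
    have : UC C ∪ {S : Finset V | ∅ ⊆ S} = Set.univ := by
      ext S; simp
    rw [this]
    exact FiltU.top _
  | insert v D hv ih =>
    intro C hC
    rw [Finset.disjoint_insert_left] at hC
    apply FiltU.split _ _ {v} ((UC_upper C).union (sup_upper _))
    · have : {S | S ∪ {v} ∈ UC C ∪ {S | insert v D ⊆ S}} = UC C ∪ {S | D ⊆ S} := by
        ext S
        simp only [UC, Set.mem_union, Set.mem_setOf_eq]
        constructor
        · rintro (⟨w, hw, hwS⟩ | h)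
          · left
            refine ⟨w, hw, ?_⟩
            rcases Finset.mem_union.1 hwS with h1 | h1
            · exact h1
            · rw [Finset.mem_singleton.1 h1] at hw
              exact absurd hw hC.1
          · right
            intro w hw
            rcases Finset.mem_union.1 (h (Finset.mem_insert_of_mem hw)) with h1 | h1
            · exact h1
            · rw [Finset.mem_singleton.1 h1] at hw
              exact absurd hw hv
        · rintro (⟨w, hw, hwS⟩ | h)
          · exact Or.inl ⟨w, hw, Finset.mem_union_left _ hwS⟩
          · right
            intro w hw
            rcases Finset.mem_insert.1 hw with rfl | h1
            · simp
            · exact Finset.mem_union_left _ (h h1)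
      rw [this]
      exact ih C hC.2
    · have : UC C ∪ {S | insert v D ⊆ S} ∪ {S | {v} ⊆ S} = UC (insert v C) := by
        ext S
        simp only [UC, Set.mem_union, Set.mem_setOf_eq, Finset.singleton_subset_iff]
        constructor
        · rintro ((⟨w, hw, hwS⟩ | h) | h)
          · exact ⟨w, Finset.mem_insert_of_mem hw, hwS⟩
          · exact ⟨v, Finset.mem_insert_self _ _, h (Finset.mem_insert_self _ _)⟩
          · exact ⟨v, Finset.mem_insert_self _ _, h⟩
        · rintro ⟨w, hw, hwS⟩
          rcases Finset.mem_insert.1 hw with rfl | h1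
          · exact Or.inr hwS
          · exact Or.inl (Or.inl ⟨w, h1, hwS⟩)
      rw [this, ← Finset.card_insert_of_notMem hC.1]
      exact FiltU.prime _

theorem esymm_sub_mem (C : Finset V) (d : ℕ) (h : C.card + d = Fintype.card V) :
    esymm V K d - xMon K Cᶜ ∈ sqI K (UC C) := by
  classical
  have hmem : Cᶜ ∈ Finset.powersetCard d (Finset.univ : Finset V) := by
    rw [Finset.mem_powersetCard]
    refine ⟨Finset.subset_univ _, ?_⟩
    rw [Finset.card_compl]; omega
  have : esymm V K d = ∑ t ∈ Finset.powersetCard d Finset.univ, xMon K t := rfl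
  rw [this, ← Finset.add_sum_erase _ _ hmem, add_sub_cancel_left]
  apply Ideal.sum_mem
  intro t ht
  rw [Finset.mem_erase, Finset.mem_powersetCard] at ht
  obtain ⟨hne, -, hcard⟩ := ht
  rw [xMon_eq, monomial_mem_sqI K (UC_upper C), ind_support]
  by_contra hcon
  apply hne
  apply Finset.eq_of_subset_of_card_le
  · intro v hv
    rw [Finset.mem_compl]
    intro hvC
    exact hcon ⟨v, hvC, hv⟩
  · rw [Finset.card_compl]; omega

theorem WR_eL (d : ℕ) : ∀ (c : ℕ) (U : Set (Finset V)), FiltU c U →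
    c + d = Fintype.card V → WR (eL V K d) (sqI K U) := by
  classical
  induction d with
  | zero => intros; trivial
  | succ d ih =>
    intro c U h
    induction h with
    | top c => intro _; rw [sqI_univ]; exact WR_top _
    | prime C =>
      intro hc
      have hsub := esymm_sub_mem K C (d + 1) hc
      refine ⟨?_, ?_⟩
      · intro p hp
        have h1 : xMon K Cᶜ * p ∈ sqI K (UC C) := by
          have : xMon K Cᶜ * p = esymm V K (d + 1) * p
            - (esymm V K (d + 1) - xMon K Cᶜ) * p := by ring
          rw [this]
          exact Ideal.sub_mem _ hp (Ideal.mul_mem_right _ _ hsub)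
        rw [sqI_colon K (UC_upper C)] at h1
        refine sqI_mono K ?_ h1
        rintro S ⟨v, hv, hvS⟩
        refine ⟨v, hv, ?_⟩
        rcases Finset.mem_union.1 hvS with h2 | h2
        · exact h2
        · exact absurd hv (Finset.mem_compl.1 h2)
      · have : sqI K (UC C) ⊔ Ideal.span {esymm V K (d + 1)} =
            sqI K (UC C ∪ {S | Cᶜ ⊆ S}) := by
          rw [← sqI_sup]
          apply le_antisymm
          · apply sup_le le_sup_left
            rw [Ideal.span_singleton_le_iff_mem, mem_sup_span]
            exact ⟨_, hsub, 1, by ring⟩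
          · apply sup_le le_sup_left
            rw [Ideal.span_singleton_le_iff_mem, mem_sup_span]
            exact ⟨_, Submodule.neg_mem _ hsub, 1, by ring⟩
        rw [this]
        exact ih (C.card + 1) _ (filt_coprime Cᶜ C disjoint_compl_left) (by omega)
    | split c U A hU h1 h2 ih1 ih2 =>
      intro hc
      apply WR_split (xMon K A) _ _ _ (sqI_colon K hU A) (ih1 hc)
      rw [sqI_sup]
      exact ih2 hc

/-! ### Regular sequences and depth -/

theorem WR_regular {R : Type} [CommRing R] (L : List R) : ∀ (M : Type) [AddCommGroup M]
    [Module R M] (φ : R →ₗ[R] M), Function.Surjective φ → WR L (LinearMap.ker φ) →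
    RingTheory.Sequence.IsWeaklyRegular M L := by
  induction L with
  | nil => intro M _ _ φ _ _; exact RingTheory.Sequence.IsWeaklyRegular.nil R M
  | cons f L ih =>
    rintro M _ _ φ hφ ⟨h1, h2⟩
    rw [RingTheory.Sequence.isWeaklyRegular_cons_iff]
    refine ⟨?_, ?_⟩
    · rw [isSMulRegular_iff_right_eq_zero_of_smul]
      intro x hx
      obtain ⟨p, rfl⟩ := hφ x
      have := h1 p (by rw [LinearMap.mem_ker, ← smul_eq_mul, map_smul]; exact hx)
      exact LinearMap.mem_ker.1 this
    · apply ih (QuotSMulTop f M) ((Submodule.mkQ _).comp φ)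
      · exact (Submodule.mkQ_surjective _).comp hφ
      · convert h2 using 1
        ext x
        rw [LinearMap.mem_ker, LinearMap.comp_apply, Submodule.mkQ_apply,
          Submodule.Quotient.mk_eq_zero, Submodule.mem_smul_pointwise_iff_exists, mem_sup_span]
        constructor
        · rintro ⟨y, -, hy⟩
          obtain ⟨t, rfl⟩ := hφ y
          refine ⟨x - f * t, ?_, t, by ring⟩
          rw [LinearMap.mem_ker, map_sub, ← hy, ← smul_eq_mul, map_smul, sub_self]
        · rintro ⟨i, hi, t, rfl⟩
          refine ⟨φ t, trivial, ?_⟩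
          rw [map_add, LinearMap.mem_ker.1 hi, zero_add, ← smul_eq_mul, map_smul]

theorem eL_length (d : ℕ) : (eL V K d).length = d := by
  induction d with
  | zero => rfl
  | succ d ih => rw [eL, List.length_cons, ih]

theorem eL_mem (d : ℕ) : ∀ r ∈ eL V K d,
    r ∈ Ideal.span (Set.range (X : V → MvPolynomial V K)) := by
  induction d with
  | zero => intro r hr; simp [eL] at hr
  | succ d ih =>
    intro r hr
    rw [eL, List.mem_cons] at hr
    rcases hr with rfl | hr
    · rw [esymm]
      apply Ideal.sum_mem
      intro t ht
      rw [Finset.mem_powersetCard] at ht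
      have hne : t.Nonempty := by rw [← Finset.card_pos]; omega
      obtain ⟨v, hv⟩ := hne
      rw [← Finset.mul_prod_erase _ _ hv]
      exact Ideal.mul_mem_right _ _ (Ideal.subset_span ⟨v, rfl⟩)
    · exact ih r hr

theorem maxIdeal_ne_top : Ideal.span (Set.range (X : V → MvPolynomial V K)) ≠ ⊤ := by
  intro h
  have h1 : Ideal.span (Set.range (X : V → MvPolynomial V K)) ≤
      RingHom.ker (MvPolynomial.constantCoeff (σ := V) (R := K)) := by
    rw [Ideal.span_le]
    rintro _ ⟨v, rfl⟩
    simp [RingHom.mem_ker]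
  have h2 : (1 : MvPolynomial V K) ∈ Ideal.span (Set.range (X : V → MvPolynomial V K)) := by
    rw [h]; trivial
  have h3 := h1 h2
  rw [RingHom.mem_ker, map_one] at h3
  exact one_ne_zero h3

theorem regular_of_WR (I : Ideal (MvPolynomial V K)) (L : List (MvPolynomial V K))
    (hI : I ≤ Ideal.span (Set.range (X : V → MvPolynomial V K)))
    (hL : ∀ r ∈ L, r ∈ Ideal.span (Set.range (X : V → MvPolynomial V K)))
    (h : WR L I) : RingTheory.Sequence.IsRegular (MvPolynomial V K ⧸ I) L := by
  refine ⟨?_, ?_⟩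
  · apply WR_regular L _ (Submodule.mkQ I) (Submodule.mkQ_surjective _)
    rw [Submodule.ker_mkQ]; exact h
  · intro htop
    set m := Ideal.span (Set.range (X : V → MvPolynomial V K)) with hm
    have h1 : (Ideal.ofList L • ⊤ : Submodule (MvPolynomial V K) (MvPolynomial V K ⧸ I)) ≤
        Submodule.map (Submodule.mkQ I) m := by
      rw [Submodule.smul_le]
      intro r hr n _
      have hr1 : r ∈ m := by
        have : Ideal.ofList L ≤ m := by
          rw [Ideal.ofList, Ideal.span_le]
          exact hL
        exact this hr
      obtain ⟨p, rfl⟩ := Submodule.mkQ_surjective I n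
      refine ⟨r * p, Ideal.mul_mem_right _ _ hr1, ?_⟩
      rw [← smul_eq_mul, map_smul]
    rw [← htop, top_le_iff] at h1
    have h2 : Submodule.comap (Submodule.mkQ I) (Submodule.map (Submodule.mkQ I) m) = ⊤ := by
      rw [h1, Submodule.comap_top]
    rw [Submodule.comap_map_mkQ, sup_eq_right.2 hI] at h2
    exact maxIdeal_ne_top K h2

/-- Regular sequences are no longer than the dimension of the support. -/
theorem regular_length_le {R : Type} [CommRing R] [IsNoetherianRing R] (L : List R) :
    ∀ (M : Type) [AddCommGroup M] [Module R M] [Module.Finite R M],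
    RingTheory.Sequence.IsRegular M L → (L.length : WithBot ℕ∞) ≤ Module.supportDim R M := by
  induction L with
  | nil =>
    intro M _ _ _ h
    have := h.nontrivial
    have h1 : Module.supportDim R M ≠ ⊥ := Module.supportDim_ne_bot_iff_nontrivial R M |>.2 this
    obtain ⟨a, ha⟩ := WithBot.ne_bot_iff_exists.1 h1
    rw [← ha]
    simp
  | cons f L ih =>
    intro M _ _ _ h
    rw [RingTheory.Sequence.isRegular_cons_iff] at h
    have h1 := ih (QuotSMulTop f M) h.2
    have h2 : Module.supportDim R (QuotSMulTop f M) + 1 ≤ Module.supportDim R M := by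
      apply Module.supportDim_quotSMulTop_succ_le_of_notMem_minimalPrimes
      intro p hp
      exact h.1.notMem_of_mem_minimalPrimes hp
    refine le_trans ?_ h2
    rw [List.length_cons]
    push_cast
    exact add_le_add_left h1 1

theorem dim_quot_prime_le (P : Ideal (MvPolynomial V K)) [P.IsPrime] (C : Finset V)
    (hC : ∀ v ∈ C, (X v : MvPolynomial V K) ∈ P) :
    ringKrullDim (MvPolynomial V K ⧸ P) ≤ ((Fintype.card V - C.card : ℕ) : WithBot ℕ∞) := by
  classical
  let f : MvPolynomial {v // v ∉ C} K →+* (MvPolynomial V K ⧸ P) :=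
    (Ideal.Quotient.mk P).comp (MvPolynomial.rename (R := K) (Subtype.val : {v // v ∉ C} → V)).toRingHom
  have hf : Function.Surjective f := by
    intro y
    obtain ⟨p, rfl⟩ := Ideal.Quotient.mk_surjective y
    induction p using MvPolynomial.induction_on with
    | C a => exact ⟨MvPolynomial.C a, by simp [f]⟩
    | add p q hp hq =>
      obtain ⟨a, ha⟩ := hp
      obtain ⟨b, hb⟩ := hq
      exact ⟨a + b, by rw [map_add, ha, hb, map_add]⟩
    | mul_X p v hp =>
      obtain ⟨a, ha⟩ := hp
      by_cases hv : v ∈ C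
      · refine ⟨0, ?_⟩
        rw [map_zero, eq_comm, Ideal.Quotient.eq_zero_iff_mem]
        exact Ideal.mul_mem_left _ _ (hC v hv)
      · refine ⟨a * X ⟨v, hv⟩, ?_⟩
        rw [map_mul, ha, map_mul]
        congr 1
        simp [f]
  refine (ringKrullDim_le_of_surjective f hf).trans ?_
  rw [MvPolynomial.ringKrullDim_of_isNoetherianRing, ringKrullDim_eq_zero_of_field, zero_add]
  rw [Nat.card_eq_fintype_card, Fintype.card_subtype_compl, Fintype.card_coe]

theorem dim_quot_le (I : Ideal (MvPolynomial V K)) (c : ℕ)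
    (h : ∀ P : Ideal (MvPolynomial V K), P.IsPrime → I ≤ P →
      ∃ C : Finset V, C.card = c ∧ ∀ v ∈ C, (X v : MvPolynomial V K) ∈ P) :
    ringKrullDim (MvPolynomial V K ⧸ I) ≤ ((Fintype.card V - c : ℕ) : WithBot ℕ∞) := by
  rw [ringKrullDim_quotient, Order.krullDim]
  apply iSup_le
  intro s
  obtain ⟨C, hCc, hC⟩ := h s.head.1.asIdeal s.head.1.isPrime s.head.2
  have h1 := dim_quot_prime_le K s.head.1.asIdeal C hC
  rw [hCc, ringKrullDim_quotient] at h1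
  refine le_trans ?_ h1
  let t : LTSeries (PrimeSpectrum.zeroLocus (s.head.1.asIdeal : Set (MvPolynomial V K))) :=
    { length := s.length
      toFun := fun i => ⟨(s i).1, by
        have : s.head ≤ s i := s.head_le i
        exact this⟩
      step := fun i => s.step i }
  exact Order.LTSeries.length_le_krullDim t

theorem length_le_of_cover (I : Ideal (MvPolynomial V K)) (c : ℕ)
    (h : ∀ P : Ideal (MvPolynomial V K), P.IsPrime → I ≤ P →
      ∃ C : Finset V, C.card = c ∧ ∀ v ∈ C, (X v : MvPolynomial V K) ∈ P)
    (L : List (MvPolynomial V K))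
    (hL : RingTheory.Sequence.IsRegular (MvPolynomial V K ⧸ I) L) :
    L.length ≤ Fintype.card V - c := by
  have h1 := regular_length_le L _ hL
  rw [Module.supportDim_quotient_eq_ringKrullDim] at h1
  have h2 := h1.trans (dim_quot_le K I c h)
  exact_mod_cast h2

theorem gradedDepth_le (I : Ideal (MvPolynomial V K)) (c : ℕ)
    (h : ∀ P : Ideal (MvPolynomial V K), P.IsPrime → I ≤ P →
      ∃ C : Finset V, C.card = c ∧ ∀ v ∈ C, (X v : MvPolynomial V K) ∈ P) :
    gradedDepth K I ≤ Fintype.card V - c := by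
  rw [gradedDepth]
  by_cases hne : {n | ∃ rs : List (MvPolynomial V K), rs.length = n ∧
    (∀ r ∈ rs, r ∈ Ideal.span (Set.range (X : V → MvPolynomial V K))) ∧
    RingTheory.Sequence.IsRegular (MvPolynomial V K ⧸ I) rs}.Nonempty
  · apply csSup_le hne
    rintro n ⟨L, rfl, -, hL⟩
    exact length_le_of_cover K I c h L hL
  · rw [Set.not_nonempty_iff_eq_empty] at hne
    rw [hne]; simp

theorem le_gradedDepth {U : Set (Finset V)} {c d : ℕ} (hU : FiltU c U)
    (hcd : c + d = Fintype.card V) (h0 : ∅ ∉ U) : d ≤ gradedDepth K (sqI K U) := by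
  rw [gradedDepth]
  apply le_csSup
  · refine ⟨Fintype.card V - 0, ?_⟩
    rintro n ⟨L, rfl, -, hL⟩
    exact length_le_of_cover K _ 0 (fun P _ _ => ⟨∅, rfl, by simp⟩) L hL
  · refine ⟨eL V K d, eL_length K d, eL_mem K d, ?_⟩
    apply regular_of_WR K _ _ _ (eL_mem K d) (WR_eL K d c U hU hcd)
    rw [sqI, Ideal.span_le]
    rintro _ ⟨s, hs, rfl⟩
    have hne : s.support.Nonempty := by
      rw [Finset.nonempty_iff_ne_empty]
      intro hh
      rw [Set.mem_setOf_eq, hh] at hs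
      exact h0 hs
    obtain ⟨v, hv⟩ := hne
    rw [Finsupp.mem_support_iff] at hv
    have : (X v : MvPolynomial V K) ∣ monomial s 1 := by
      rw [MvPolynomial.X_dvd_monomial]
      exact Or.inr hv
    obtain ⟨q, hq⟩ := this
    show monomial s (1 : K) ∈ Ideal.span (Set.range (X : V → MvPolynomial V K))
    rw [hq]
    exact Ideal.mul_mem_right _ _ (Ideal.subset_span ⟨v, rfl⟩)

/-! ### Square-free powers -/

theorem UM_succ {S : Finset (Finset V)} {k : ℕ} {F A : Finset V} (hF : F ∈ S)
    (hne : F.Nonempty) (hFA : F ⊆ A) (h : A \ F ∈ UM k S) : A ∈ UM (k + 1) S := by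
  classical
  obtain ⟨M, hMS, hMd, hMc, hMA⟩ := h
  have hFH : ∀ H ∈ M, F ∩ H = ∅ := by
    intro H hH
    rw [← Finset.disjoint_iff_inter_eq_empty]
    exact Finset.disjoint_of_subset_right (hMA H hH) Finset.disjoint_sdiff
  have hFM : F ∉ M := by
    intro hh
    have := hFH F hh
    rw [Finset.inter_self] at this
    exact hne.ne_empty this
  refine ⟨insert F M, ?_, ?_, ?_, ?_⟩
  · intro H hH
    rcases Finset.mem_insert.1 hH with hH1 | hH1
    · rw [hH1]; exact hF
    · exact hMS hH1
  · intro B hB C hC hBC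
    rcases Finset.mem_insert.1 hB with hB1 | hB1
    · rcases Finset.mem_insert.1 hC with hC1 | hC1
      · exact absurd (hB1.trans hC1.symm) hBC
      · rw [hB1]; exact hFH C hC1
    · rcases Finset.mem_insert.1 hC with hC1 | hC1
      · rw [hC1, Finset.inter_comm]; exact hFH B hB1
      · exact hMd B hB1 C hC1 hBC
  · rw [Finset.card_insert_of_notMem hFM, hMc]
  · intro H hH
    rcases Finset.mem_insert.1 hH with hH1 | hH1
    · rw [hH1]; exact hFA
    · exact (hMA H hH1).trans Finset.sdiff_subset

theorem UM_of_list {S : Finset (Finset V)} (hS : ∀ F ∈ S, F.Nonempty) (l : List (Finset V)) :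
    ∀ A : Finset V, (∀ F ∈ l, F ∈ S) → (l.map ind).sum ≤ ind A → A ∈ UM l.length S := by
  classical
  induction l with
  | nil =>
    intro A _ _
    exact ⟨∅, by simp, by simp, by simp, by simp⟩
  | cons F l ih =>
    intro A hl hle
    rw [List.map_cons, List.sum_cons] at hle
    have hFA : F ⊆ A := by
      intro v hv
      have := hle v
      rw [Finsupp.add_apply, ind_apply, ind_apply, if_pos hv] at this
      by_contra hvA
      rw [if_neg hvA] at this
      omega
    have hF : F ∈ S := hl F (by simp)
    rw [List.length_cons]
    apply UM_succ hF (hS F hF) hFA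
    apply ih
    · intro G hG; exact hl G (by simp [hG])
    · intro v
      have := hle v
      rw [Finsupp.add_apply, ind_apply, ind_apply] at this
      simp only [ind_apply, Finset.mem_sdiff]
      by_cases h1 : v ∈ F
      · have h2 := hFA h1
        simp only [h1, h2, if_true] at this
        simp only [h1, h2]
        simp; omega
      · by_cases h2 : v ∈ A
        · simp only [h1, h2, if_true, if_false] at this
          simp only [h1, h2]
          simp; omega
        · simp only [h1, h2, if_false] at this
          simp only [h1, h2]
          simp; omega

theorem facet_pow_le (S : Finset (Finset V)) (k : ℕ) : facetIdealOf K S ^ k ≤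
    Ideal.span (Set.image (fun s => monomial s (1 : K))
      {s : V →₀ ℕ | ∃ l : List (Finset V), l.length = k ∧ (∀ F ∈ l, F ∈ S) ∧
        s = (l.map ind).sum}) := by
  induction k with
  | zero =>
    rw [pow_zero, Ideal.one_eq_top, top_le_iff, Ideal.eq_top_iff_one]
    apply Ideal.subset_span
    exact ⟨0, ⟨[], rfl, by simp, by simp⟩, rfl⟩
  | succ k ih =>
    rw [pow_succ']
    refine (Ideal.mul_mono_right ih).trans ?_
    rw [facetIdealOf, Ideal.span_mul_span', Ideal.span_le]
    rintro _ ⟨_, ⟨F, hF, rfl⟩, _, ⟨s, ⟨l, hl, hlS, rfl⟩, rfl⟩, rfl⟩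
    apply Ideal.subset_span
    refine ⟨ind F + (l.map ind).sum, ⟨F :: l, ?_, ?_, ?_⟩, ?_⟩
    · rw [List.length_cons, hl]
    · intro G hG
      rcases List.mem_cons.1 hG with h | h
      · rw [h]; exact hF
      · exact hlS G h
    · rw [List.map_cons, List.sum_cons]
    · simp only [xMon_eq, MvPolynomial.monomial_mul, one_mul]

theorem prod_mem_facet_pow (S M : Finset (Finset V)) (hM : M ⊆ S) :
    ∏ H ∈ M, xMon K H ∈ facetIdealOf K S ^ M.card := by
  classical
  induction M using Finset.induction_on with
  | empty => simp
  | insert F M hF ih =>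
    rw [Finset.prod_insert hF, Finset.card_insert_of_notMem hF, pow_succ']
    apply Ideal.mul_mem_mul
    · exact Ideal.subset_span ⟨F, hM (Finset.mem_insert_self _ _), rfl⟩
    · exact ih ((Finset.subset_insert _ _).trans hM)

theorem sqfreePow_eq (S : Finset (Finset V)) (hS : ∀ F ∈ S, F.Nonempty) (k : ℕ) :
    sqfreePow K (facetIdealOf K S) k = sqI K (UM k S) := by
  classical
  apply le_antisymm
  · rw [sqfreePow, Ideal.span_le]
    rintro p ⟨⟨A, rfl⟩, hp⟩
    have h1 := facet_pow_le K S k hp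
    rw [MvPolynomial.mem_ideal_span_monomial_image, xMon_eq] at h1
    obtain ⟨s, ⟨l, hl, hlS, rfl⟩, hle⟩ := h1 (ind A) (by simp [MvPolynomial.mem_support_iff])
    show xMon K A ∈ sqI K (UM k S)
    rw [xMon_eq, monomial_mem_sqI K (UM_upper k S), ind_support, ← hl]
    exact UM_of_list hS l A hlS hle
  · rw [sqI, Ideal.span_le]
    rintro _ ⟨s, ⟨M, hMS, hMd, hMc, hMs⟩, rfl⟩
    have h1 : xMon K s.support ∈ sqfreePow K (facetIdealOf K S) k := by
      apply Ideal.subset_span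
      refine ⟨⟨_, rfl⟩, ?_⟩
      have h2 := prod_mem_facet_pow K S M hMS
      rw [hMc] at h2
      refine Ideal.mem_of_dvd _ ?_ h2
      have h3 : ∏ H ∈ M, xMon K H = xMon K (M.biUnion id) := by
        rw [xMon, Finset.prod_biUnion]
        · rfl
        · intro F hF G hG hFG
          exact Finset.disjoint_iff_inter_eq_empty.2 (hMd F hF G hG hFG)
      rw [h3]
      apply Finset.prod_dvd_prod_of_subset
      intro v hv
      obtain ⟨H, hH, hvH⟩ := Finset.mem_biUnion.1 hv
      exact hMs H hH hvH
    have h4 : xMon K s.support ∣ monomial s (1 : K) := by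
      have hle : ind s.support ≤ s := by
        intro v
        rw [ind_apply]
        split_ifs with hv
        · rw [Finsupp.mem_support_iff] at hv
          omega
        · omega
      refine ⟨monomial (s - ind s.support) 1, ?_⟩
      rw [xMon_eq, MvPolynomial.monomial_mul, add_tsub_cancel_of_le hle, one_mul]
    exact Ideal.mem_of_dvd _ h4 h1

theorem UM_pred {S : Finset (Finset V)} (hS : ∀ F ∈ S, F.Nonempty) {k : ℕ} {A : Finset V}
    (h : A ∈ UM (k + 1) S) : ∃ B ∈ UM k S, B.card + 1 ≤ A.card := by
  classical
  obtain ⟨M, hMS, hMd, hMc, hMA⟩ := h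
  have hne : M.Nonempty := by rw [← Finset.card_pos]; omega
  obtain ⟨F, hF⟩ := hne
  refine ⟨A \ F, ⟨M.erase F, (Finset.erase_subset _ _).trans hMS, ?_, ?_, ?_⟩, ?_⟩
  · intro B hB C hC hBC
    exact hMd B (Finset.mem_of_mem_erase hB) C (Finset.mem_of_mem_erase hC) hBC
  · rw [Finset.card_erase_of_mem hF, hMc]; omega
  · intro H hH v hv
    rw [Finset.mem_erase] at hH
    rw [Finset.mem_sdiff]
    exact ⟨hMA H hH.2 hv, fun hvF => not_mem_of_inter_empty (hMd H hH.2 F hF hH.1) hv hvF⟩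
  · have h1 := Finset.card_sdiff_add_card_eq_card (hMA F hF)
    have h2 := Finset.card_pos.2 (hS F (hMS hF))
    omega

/-- Every prime containing the square-free power contains many variables. -/
theorem prime_cover {S Q : Finset (Finset V)} (hQS : Q ⊆ S)
    (hQd : ∀ F ∈ Q, ∀ G ∈ Q, F ≠ G → F ∩ G = ∅) (k : ℕ)
    (P : Ideal (MvPolynomial V K)) (hP : P.IsPrime) (hle : sqI K (UM (k + 1) S) ≤ P) :
    ∃ C : Finset V, C.card = Q.card - k ∧ ∀ v ∈ C, (X v : MvPolynomial V K) ∈ P := by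
  classical
  set G := Q.filter (fun F => ∃ v ∈ F, (X v : MvPolynomial V K) ∈ P) with hG
  set B := Q.filter (fun F => ¬ ∃ v ∈ F, (X v : MvPolynomial V K) ∈ P) with hB
  have hcard : G.card + B.card = Q.card := Finset.card_filter_add_card_filter_not _
  have hBk : B.card ≤ k := by
    by_contra hcon
    obtain ⟨M, hMB, hMc⟩ := Finset.exists_subset_card_eq (show k + 1 ≤ B.card by omega)
    have h1 : xMon K (M.biUnion id) ∈ P := by
      apply hle
      rw [xMon_eq, monomial_mem_sqI K (UM_upper _ _), ind_support]
      have hMQ : M ⊆ Q := hMB.trans (Finset.filter_subset _ _)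
      exact ⟨M, hMQ.trans hQS, fun F hF G hG => hQd F (hMQ hF) G (hMQ hG), hMc,
        fun H hH => Finset.subset_biUnion_of_mem id hH⟩
    rw [xMon, hP.prod_mem_iff] at h1
    obtain ⟨v, hv, hvP⟩ := h1
    obtain ⟨H, hH, hvH⟩ := Finset.mem_biUnion.1 hv
    exact (Finset.mem_filter.1 (hMB hH)).2 ⟨v, hvH, hvP⟩
  have hex : ∀ F ∈ G, ∃ v ∈ F, (X v : MvPolynomial V K) ∈ P := by
    intro F hF
    exact (Finset.mem_filter.1 hF).2
  by_cases hGe : G.Nonempty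
  swap
  · rw [Finset.not_nonempty_iff_eq_empty] at hGe
    refine ⟨∅, ?_, by simp⟩
    rw [hGe] at hcard
    simp at hcard ⊢
    omega
  have hVn : Nonempty V := by
    obtain ⟨F, hF⟩ := hGe
    obtain ⟨v, -⟩ := hex F hF
    exact ⟨v⟩
  choose! g hgF hgP using hex
  have hinj : Set.InjOn g (G : Set (Finset V)) := by
    intro F hF F' hF' heq
    by_contra hne
    have h1 := hgF F hF
    have h2 := hgF F' hF'
    rw [heq] at h1
    exact not_mem_of_inter_empty (hQd F (Finset.mem_filter.1 hF).1 F'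
      (Finset.mem_filter.1 hF').1 hne) h1 h2
  have hic : (G.image g).card = G.card := Finset.card_image_of_injOn hinj
  obtain ⟨C, hCG, hCc⟩ := Finset.exists_subset_card_eq
    (show Q.card - k ≤ (G.image g).card by omega)
  refine ⟨C, hCc, ?_⟩
  intro v hv
  obtain ⟨F, hF, rfl⟩ := Finset.mem_image.1 (hCG hv)
  exact hgP F hF

theorem parts_card_le {Q : Finset (Finset V)} (hQn : ∀ F ∈ Q, F.Nonempty)
    (hQd : ∀ F ∈ Q, ∀ G ∈ Q, F ≠ G → F ∩ G = ∅) : Q.card ≤ Fintype.card V := by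
  classical
  have h1 : (Q.biUnion id).card = ∑ F ∈ Q, F.card := by
    apply Finset.card_biUnion
    intro F hF G hG hFG
    exact Finset.disjoint_iff_inter_eq_empty.2 (hQd F hF G hG hFG)
  have h2 : Q.card ≤ ∑ F ∈ Q, F.card := by
    rw [Finset.card_eq_sum_ones]
    exact Finset.sum_le_sum fun F hF => Finset.card_pos.2 (hQn F hF)
  have h3 := Finset.card_le_univ (Q.biUnion id)
  omega

theorem exists_matching {S : Finset (Finset V)} {k : ℕ} (hk : k ≤ matchingNumberOf S) :
    ∃ M ⊆ S, (∀ F ∈ M, ∀ G ∈ M, F ≠ G → F ∩ G = ∅) ∧ M.card = k := by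
  classical
  have hmem : matchingNumberOf S ∈
      {n | ∃ M : Finset (Finset V), IsMatchingOf S M ∧ M.card = n} := by
    apply Nat.sSup_mem
    · exact ⟨0, ∅, ⟨by simp, by simp⟩, rfl⟩
    · refine ⟨S.card, ?_⟩
      rintro n ⟨M, hM, rfl⟩
      exact Finset.card_le_card hM.1
  obtain ⟨M, hM, hMc⟩ := hmem
  obtain ⟨M', hM', hc⟩ := Finset.exists_subset_card_eq (show k ≤ M.card by omega)
  exact ⟨M', hM'.trans hM.1, fun F hF G hG => hM.2 F (hM' hF) G (hM' hG), hc⟩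

section Statements

variable {V : Type} [Fintype V] [DecidableEq V] (K : Type) [Field K]

/-- The minimum degree of a (minimal monomial) generator of a monomial ideal,
equivalently the least total degree of a monomial lying in the ideal. -/
noncomputable def minGenDegree (I : Ideal (MvPolynomial V K)) : ℕ :=
  sInf {n | ∃ s : V →₀ ℕ, (monomial s (1 : K)) ∈ I ∧ s.sum (fun _ e => e) = n}

theorem minGenDegree_succ {S : Finset (Finset V)} (hS : ∀ F ∈ S, F.Nonempty) {k : ℕ}
    (hne : (UM (k + 1) S).Nonempty) :
    minGenDegree K (sqI K (UM k S)) + 1 ≤ minGenDegree K (sqI K (UM (k + 1) S)) := by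
  classical
  have hmem : minGenDegree K (sqI K (UM (k + 1) S)) ∈
      {n | ∃ s : V →₀ ℕ, (monomial s (1 : K)) ∈ sqI K (UM (k + 1) S) ∧
        s.sum (fun _ e => e) = n} := by
    apply Nat.sInf_mem
    obtain ⟨A, hA⟩ := hne
    refine ⟨_, ind A, ?_, rfl⟩
    rw [monomial_mem_sqI K (UM_upper _ _), ind_support]
    exact hA
  obtain ⟨s, hs, hsum⟩ := hmem
  rw [monomial_mem_sqI K (UM_upper _ _)] at hs
  obtain ⟨B, hB, hBc⟩ := UM_pred hS hs
  have h1 : minGenDegree K (sqI K (UM k S)) ≤ B.card := by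
    apply Nat.sInf_le
    refine ⟨ind B, ?_, ?_⟩
    · rw [monomial_mem_sqI K (UM_upper _ _), ind_support]
      exact hB
    · rw [Finsupp.sum, ind_support, Finset.card_eq_sum_ones]
      apply Finset.sum_congr rfl
      intro v hv
      rw [ind_apply, if_pos hv]
  have h2 : s.support.card ≤ s.sum (fun _ e => e) := by
    rw [Finsupp.sum, Finset.card_eq_sum_ones]
    apply Finset.sum_le_sum
    intro v hv
    rw [Finsupp.mem_support_iff] at hv
    omega
  omega

theorem stmt5 (Δ : SimplicialComplexOn V)
    (hcov : ∀ v : V, ∃ F ∈ Δ.facets, v ∈ F)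
    (hCM : IsCMForestFacets Δ.facets) :
    ∀ k : ℕ, 1 ≤ k → k + 1 ≤ matchingNumberOf Δ.facets →
      (gradedDepth K (sqfreePow K (facetIdealOf K Δ.facets) (k + 1)) : ℤ) -
          ((minGenDegree K (sqfreePow K (facetIdealOf K Δ.facets) (k + 1)) : ℤ) - 1) ≤
        (gradedDepth K (sqfreePow K (facetIdealOf K Δ.facets) k) : ℤ) -
          ((minGenDegree K (sqfreePow K (facetIdealOf K Δ.facets) k) : ℤ) - 1) := by
  intro k hk hkm
  have hne := Δ.nonempty_facet
  obtain ⟨Q, hQS, hQd, hQc, hQt⟩ := grafted_structure hCM.2 Δ.antichain hne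
  have hSt : St Q Δ.facets :=
    ⟨hQd, fun F hF => ⟨F, hQS hF, subset_rfl⟩, hQc, hQt, hne, hCM.1⟩
  obtain ⟨M, hMS, hMd, hMc⟩ := exists_matching hkm
  have hkr : k + 1 ≤ Q.card := by
    rw [← hMc]; exact hSt.matching_card_le hMS hMd
  have hrn : Q.card ≤ Fintype.card V := parts_card_le (fun F hF => hne F (hQS hF)) hQd
  rw [sqfreePow_eq K _ hne, sqfreePow_eq K _ hne]
  have h1 := gradedDepth_le K (sqI K (UM (k + 1) Δ.facets)) (Q.card - k)
    (fun P hP hle => prime_cover K hQS hQd k P hP hle)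
  have hF := filt_main Q.card Q Δ.facets rfl hSt k ∅ (by omega) (by simp)
  have hU : UC (∅ : Finset V) ∪ UM k Δ.facets = UM k Δ.facets := by
    ext A
    simp [UC]
  rw [hU, Finset.card_empty, add_zero] at hF
  have h0 : ∅ ∉ UM k Δ.facets := by
    rintro ⟨N, hNS, -, hNc, hN⟩
    have hNn : N.Nonempty := by rw [← Finset.card_pos]; omega
    obtain ⟨F, hF⟩ := hNn
    exact (hne F (hNS hF)).ne_empty (Finset.subset_empty.1 (hN F hF))
  have h2 := le_gradedDepth K (d := Fintype.card V - (Q.card + 1 - k)) hF (by omega) h0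
  have h3 := minGenDegree_succ K hne (k := k)
    ⟨Finset.univ, M, hMS, hMd, hMc, fun H _ => Finset.subset_univ H⟩
  omega

end Statements
end

section
/- Let I be a monomial ideal in a polynomial ring R over a field and let m ∈ R be a monomial with m ∉ I. If R/I is Cohen-Macaulay, then R/(I : m) is Cohen-Macaulay. -/
open MvPolynomial

variable {V : Type} [Fintype V] [DecidableEq V]

variable (K : Type) [Field K]

section Statements

variable {V : Type} [Fintype V] [DecidableEq V] (K : Type) [Field K]

/-- A monomial ideal: an ideal generated by monomials. -/
def IsMonomialIdeal (I : Ideal (MvPolynomial V K)) : Prop :=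
  ∃ S : Set (V →₀ ℕ), I = Ideal.span ((fun s => monomial s (1 : K)) '' S)

set_option linter.unusedSectionVars false

namespace KosDepth

open Pointwise

section Koszul

variable {V : Type} [Fintype V] [DecidableEq V] {R : Type} [CommRing R]
variable {M : Type} [AddCommGroup M] [Module R M]

/-- sign of the position of `v` relative to `S`. -/
def sg (e : V → ℕ) (v : V) (S : Finset V) : ℤ := (-1) ^ (S.filter (fun w => e w < e v)).card

def tw (e : V → ℕ) (w v : V) : ℤ := if e w < e v then -1 else 1

lemma sg_mul_self (e : V → ℕ) (v : V) (S : Finset V) : sg e v S * sg e v S = 1 := by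
  unfold sg; rw [← mul_pow]; simp

lemma tw_mul_self (e : V → ℕ) (w v : V) : tw e w v * tw e w v = 1 := by
  unfold tw; split_ifs <;> simp

lemma tw_swap {e : V → ℕ} (he : Function.Injective e) {v w : V} (h : v ≠ w) :
    tw e w v = - tw e v w := by
  have : e v ≠ e w := fun h' => h (he h')
  unfold tw; split_ifs <;> omega

lemma sg_insert (e : V → ℕ) (v w : V) (S : Finset V) (h : w ∉ S) :
    sg e v (insert w S) = tw e w v * sg e v S := by
  unfold sg tw
  rw [Finset.filter_insert]
  split_ifs with h1
  · rw [Finset.card_insert_of_notMem (by simp [h]), pow_succ]; ring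
  · simp

lemma sg_erase (e : V → ℕ) (v w : V) (S : Finset V) (h : w ∈ S) :
    sg e v (S.erase w) = tw e w v * sg e v S := by
  have := sg_insert e v w (S.erase w) (by simp)
  rw [Finset.insert_erase h] at this
  rw [this, ← mul_assoc, tw_mul_self, one_mul]

lemma tw_self (e : V → ℕ) (v : V) : tw e v v = 1 := by simp [tw]

variable (R) in
/-- wedge with `e_v`. -/
def wE (e : V → ℕ) (v : V) : (Finset V → M) →ₗ[R] (Finset V → M) where
  toFun c S := if v ∈ S then sg e v S • c (S.erase v) else 0
  map_add' a b := by ext S; simp only [Pi.add_apply]; split_ifs <;> simp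
  map_smul' r a := by
    ext S; simp only [Pi.smul_apply, RingHom.id_apply]; split_ifs <;> simp [smul_comm (_ : ℤ) r]

variable (R) in
/-- contraction with `e_v`. -/
def cI (e : V → ℕ) (v : V) : (Finset V → M) →ₗ[R] (Finset V → M) where
  toFun c S := if v ∈ S then 0 else sg e v S • c (insert v S)
  map_add' a b := by ext S; simp only [Pi.add_apply]; split_ifs <;> simp
  map_smul' r a := by
    ext S; simp only [Pi.smul_apply, RingHom.id_apply]; split_ifs <;> simp [smul_comm (_ : ℤ) r]

lemma wE_apply (e : V → ℕ) (v : V) (c : Finset V → M) (S : Finset V) :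
    wE R e v c S = if v ∈ S then sg e v S • c (S.erase v) else 0 := rfl

lemma cI_apply (e : V → ℕ) (v : V) (c : Finset V → M) (S : Finset V) :
    cI R e v c S = if v ∈ S then 0 else sg e v S • c (insert v S) := rfl

lemma wE_wE_self (e : V → ℕ) (v : V) (c : Finset V → M) : wE R e v (wE R e v c) = 0 := by
  ext S; simp [wE_apply]

lemma wE_wE {e : V → ℕ} (he : Function.Injective e) (v w : V) (c : Finset V → M) :
    wE R e v (wE R e w c) + wE R e w (wE R e v c) = 0 := by
  by_cases h : v = w
  · subst h; simp [wE_wE_self]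
  ext S
  simp only [wE_apply, Pi.add_apply, Pi.zero_apply, Finset.mem_erase]
  by_cases hv : v ∈ S <;> by_cases hw : w ∈ S <;> simp [hv, hw, h, Ne.symm h]
  rw [sg_erase e w v S hv, sg_erase e v w S hw, tw_swap he h, Finset.erase_right_comm, smul_smul,
    smul_smul, ← add_smul]
  rw [show sg e v S * (tw e v w * sg e w S) + sg e w S * (-tw e v w * sg e v S) = 0 by ring,
    zero_smul]

lemma cI_wE_of_ne {e : V → ℕ} (he : Function.Injective e) {v w : V} (h : v ≠ w)
    (c : Finset V → M) :
    cI R e v (wE R e w c) + wE R e w (cI R e v c) = 0 := by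
  ext S
  simp only [wE_apply, cI_apply, Pi.add_apply, Pi.zero_apply, Finset.mem_erase, Finset.mem_insert]
  by_cases hv : v ∈ S <;> by_cases hw : w ∈ S <;> simp [hv, hw, h, Ne.symm h]
  rw [sg_erase e v w S hw, sg_insert e w v S hv, tw_swap he h, smul_smul,
    smul_smul, Finset.erase_insert_of_ne h, ← add_smul]
  rw [show sg e v S * (tw e v w * sg e w S) + sg e w S * (-tw e v w * sg e v S) = 0 by ring,
    zero_smul]

lemma cI_wE_self (e : V → ℕ) (v : V) (c : Finset V → M) :
    cI R e v (wE R e v c) + wE R e v (cI R e v c) = c := by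
  ext S
  simp only [wE_apply, cI_apply, Pi.add_apply]
  by_cases hv : v ∈ S
  · simp [hv, sg_erase e v v S hv, tw_self, smul_smul, sg_mul_self]
  · simp [hv, sg_insert e v v S hv, tw_self, smul_smul, sg_mul_self]

lemma cI_cI_self (e : V → ℕ) (v : V) (c : Finset V → M) : cI R e v (cI R e v c) = 0 := by
  ext S; simp [cI_apply]

/-- The Koszul differential. -/
def dK (e : V → ℕ) (x : V → R) : (Finset V → M) →ₗ[R] (Finset V → M) :=
  ∑ v, x v • wE R e v

lemma dK_apply (e : V → ℕ) (x : V → R) (c : Finset V → M) :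
    dK e x c = ∑ v, x v • wE R e v c := by simp [dK]

lemma dK_dK {e : V → ℕ} (he : Function.Injective e) (x : V → R) (c : Finset V → M) :
    dK e x (dK e x c) = 0 := by
  have : dK e x (dK e x c) =
      ∑ p ∈ (Finset.univ ×ˢ Finset.univ : Finset (V × V)),
        (x p.1 * x p.2) • wE R e p.1 (wE R e p.2 c) := by
    rw [Finset.sum_product, dK_apply]
    refine Finset.sum_congr rfl fun v _ => ?_
    rw [dK_apply, map_sum, Finset.smul_sum]
    refine Finset.sum_congr rfl fun w _ => ?_
    rw [map_smul, smul_smul]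
  rw [this]
  refine Finset.sum_involution (fun p _ => (p.2, p.1)) ?_ ?_ ?_ ?_
  · intro p _
    dsimp only
    rw [mul_comm (x p.2), ← smul_add, wE_wE he, smul_zero]
  · rintro ⟨v, w⟩ _ h h'
    apply h
    obtain rfl : w = v := congrArg Prod.fst h'
    simp [wE_wE_self]
  · simp
  · simp

lemma wE_dK {e : V → ℕ} (he : Function.Injective e) (x : V → R) (v : V) (c : Finset V → M) :
    wE R e v (dK e x c) + dK e x (wE R e v c) = 0 := by
  rw [dK_apply, dK_apply, map_sum, ← Finset.sum_add_distrib]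
  refine Finset.sum_eq_zero fun w _ => ?_
  rw [map_smul, ← smul_add, wE_wE he, smul_zero]

lemma cI_dK {e : V → ℕ} (he : Function.Injective e) (x : V → R) (v : V) (c : Finset V → M) :
    cI R e v (dK e x c) + dK e x (cI R e v c) = x v • c := by
  rw [dK_apply, dK_apply, map_sum, ← Finset.sum_add_distrib, Finset.sum_eq_single v]
  · rw [map_smul, ← smul_add, cI_wE_self]
  · intro w _ hw
    rw [map_smul, ← smul_add, cI_wE_of_ne he hw.symm, smul_zero]
  · simp

/-- supported in cardinality `< s`. -/
def Sup (s : ℕ) (c : Finset V → M) : Prop := ∀ S, s ≤ S.card → c S = 0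

lemma Sup.zero_eq {c : Finset V → M} (h : Sup 0 c) : c = 0 := by
  ext S; exact h S (Nat.zero_le _)

lemma Sup.wE {s : ℕ} {c : Finset V → M} (h : Sup s c) (e : V → ℕ) (v : V) :
    Sup (s + 1) (wE R e v c) := by
  intro S hS
  rw [wE_apply]
  split_ifs with hv
  · rw [h _ (by rw [Finset.card_erase_of_mem hv]; omega), smul_zero]
  · rfl

lemma Sup.cI {s : ℕ} {c : Finset V → M} (h : Sup (s + 1) c) (e : V → ℕ) (v : V) :
    Sup s (cI R e v c) := by
  intro S hS
  rw [cI_apply]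
  split_ifs with hv
  · rfl
  · rw [h _ (by rw [Finset.card_insert_of_notMem hv]; omega), smul_zero]

lemma Sup.add {s : ℕ} {c c' : Finset V → M} (h : Sup s c) (h' : Sup s c') : Sup s (c + c') := by
  intro S hS; simp [h S hS, h' S hS]

lemma Sup.neg {s : ℕ} {c : Finset V → M} (h : Sup s c) : Sup s (-c) := by
  intro S hS; simp [h S hS]

lemma Sup.sub {s : ℕ} {c c' : Finset V → M} (h : Sup s c) (h' : Sup s c') : Sup s (c - c') := by
  intro S hS; simp [h S hS, h' S hS]

lemma Sup.smul {s : ℕ} {c : Finset V → M} (h : Sup s c) (r : R) : Sup s (r • c) := by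
  intro S hS; simp [h S hS]

lemma Sup.mono {s s' : ℕ} {c : Finset V → M} (h : Sup s c) (hs : s ≤ s') : Sup s' c :=
  fun S hS => h S (hs.trans hS)

lemma Sup.dK {s : ℕ} {c : Finset V → M} (h : Sup s c) (e : V → ℕ) (x : V → R) :
    Sup (s + 1) (dK e x c) := by
  intro S hS
  rw [dK_apply, Finset.sum_apply]
  refine Finset.sum_eq_zero fun v _ => ?_
  rw [Pi.smul_apply, h.wE e v S hS, smul_zero]

variable {N : Type} [AddCommGroup N] [Module R N]

lemma wE_map (e : V → ℕ) (v : V) (f : M →+ N) (c : Finset V → M) :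
    wE R e v (f ∘ c) = f ∘ (wE R e v c) := by
  ext S; simp only [wE_apply, Function.comp]; split_ifs <;> simp

lemma cI_map (e : V → ℕ) (v : V) (f : M →+ N) (c : Finset V → M) :
    cI R e v (f ∘ c) = f ∘ (cI R e v c) := by
  ext S; simp only [cI_apply, Function.comp]; split_ifs <;> simp

lemma dK_map (e : V → ℕ) (x : V → R) (f : M →ₗ[R] N) (c : Finset V → M) :
    dK e x (f ∘ c) = f ∘ (dK e x c) := by
  rw [dK_apply, dK_apply]
  ext S
  simp only [Finset.sum_apply, Function.comp, map_sum, Pi.smul_apply, map_smul]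
  refine Finset.sum_congr rfl fun v _ => ?_
  have := congrFun (wE_map (R := R) e v f.toAddMonoidHom c) S
  exact congrArg _ this

lemma Sup.map {s : ℕ} {c : Finset V → M} (h : Sup s c) (f : M →+ N) : Sup s (f ∘ c) := by
  intro S hS; simp [h S hS]

lemma exists_lift {s : ℕ} (f : M →ₗ[R] N) {c : Finset V → N} (hc : Sup s c)
    (h : ∀ S, ∃ m, f m = c S) : ∃ b : Finset V → M, Sup s b ∧ f ∘ b = c := by
  classical
  choose g hg using h
  refine ⟨fun S => if c S = 0 then 0 else g S, fun S hS => by simp [hc S hS], ?_⟩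
  ext S
  by_cases h0 : c S = 0 <;> simp [h0, hg]

variable (M) in
/-- Vanishing of Koszul cohomology in degrees `< t`. -/
def KV (e : V → ℕ) (x : V → R) (t : ℕ) : Prop :=
  ∀ s < t, ∀ c : Finset V → M, Sup (s + 1) c → dK e x c = 0 → ∃ b, Sup s b ∧ dK e x b = c

/-- Depth lemma. -/
lemma KV.of_exact {e : V → ℕ} (he : Function.Injective e) {x : V → R} {t : ℕ}
    {P : Type} [AddCommGroup P] [Module R P] (f : M →ₗ[R] N) (g : N →ₗ[R] P)
    (hf : Function.Injective f) (hg : Function.Surjective g) (hfg : Function.Exact f g)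
    (hN : KV N e x t) (hP : KV P e x (t - 1)) : KV M e x t := by
  intro s hs c hc hdc
  obtain ⟨b, hb, hdb⟩ := hN s hs (f ∘ c) (hc.map f.toAddMonoidHom) (by
    rw [dK_map, hdc]; ext S; simp)
  have key : ∃ b1 : Finset V → N, Sup s b1 ∧ dK e x b1 = f ∘ c ∧ g ∘ b1 = 0 := by
    rcases s with _ | s
    · refine ⟨b, hb, hdb, ?_⟩
      rw [hb.zero_eq]; ext S; simp
    · obtain ⟨a, ha, hda⟩ := hP s (by omega) (g ∘ b) (hb.map g.toAddMonoidHom) (by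
        rw [dK_map, hdb]; ext S; simp [hfg.apply_apply_eq_zero])
      obtain ⟨a', ha', haa⟩ := exists_lift g ha (fun S => hg _)
      refine ⟨b - dK e x a', hb.sub (ha'.dK e x), ?_, ?_⟩
      · rw [map_sub, dK_dK he, hdb, sub_zero]
      · have h1 : g ∘ (dK e x a') = g ∘ b := by rw [← dK_map, haa, hda]
        ext S
        have := congrFun h1 S
        simp only [Function.comp] at this
        simp [this]
  obtain ⟨b1, hb1, hdb1, hgb1⟩ := key
  obtain ⟨b', hb', hbb⟩ := exists_lift f hb1 (fun S => (hfg _).mp (congrFun hgb1 S))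
  refine ⟨b', hb', ?_⟩
  have : f ∘ (dK e x b') = f ∘ c := by rw [← dK_map, hbb, hdb1]
  ext S
  exact hf (congrFun this S)

lemma quot_eq_zero {r : R} {m : M}
    (h : (Submodule.mkQ (r • (⊤ : Submodule R M))) m = 0) : ∃ m', r • m' = m := by
  rw [Submodule.mkQ_apply, Submodule.Quotient.mk_eq_zero] at h
  obtain ⟨m', -, hm⟩ := h
  exact ⟨m', hm⟩

lemma exists_smul_lift {s : ℕ} (r : R) {c : Finset V → M} (hc : Sup s c)
    (h : (Submodule.mkQ (r • (⊤ : Submodule R M))) ∘ c = 0) :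
    ∃ b : Finset V → M, Sup s b ∧ r • b = c := by
  obtain ⟨b, hb, h1⟩ := exists_lift (LinearMap.lsmul R M r) hc (fun S => by
    obtain ⟨m', hm'⟩ := quot_eq_zero (congrFun h S)
    exact ⟨m', hm'⟩)
  exact ⟨b, hb, h1⟩

lemma smul_pi_inj {r : R} (hr : IsSMulRegular M r) {b c : Finset V → M} (h : r • b = r • c) :
    b = c := by
  ext S; exact hr (congrFun h S)

lemma KV.quot {e : V → ℕ} (he : Function.Injective e) {x : V → R} {t : ℕ} {r : R}
    (hr : IsSMulRegular M r) (h : KV M e x (t + 1)) : KV (QuotSMulTop r M) e x t := by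
  intro s hs c hc hdc
  let q := Submodule.mkQ (r • (⊤ : Submodule R M))
  obtain ⟨c1, hc1, hq⟩ := exists_lift q hc (fun S => Submodule.mkQ_surjective _ _)
  obtain ⟨c', hc', hrc'⟩ := exists_smul_lift r (hc1.dK e x) (by
    change q ∘ _ = 0
    rw [← dK_map, hq]; exact hdc)
  obtain ⟨b, hb, hdb⟩ := h (s + 1) (by omega) c' hc' (by
    apply smul_pi_inj hr
    rw [← map_smul, hrc', dK_dK he, smul_zero])
  obtain ⟨a, ha, hda⟩ := h s (by omega) (c1 - r • b) (hc1.sub (hb.smul r)) (by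
    rw [map_sub, map_smul, hdb, hrc', sub_self])
  refine ⟨q ∘ a, ha.map q.toAddMonoidHom, ?_⟩
  rw [dK_map, hda]
  have : ∀ m : M, q (r • m) = 0 := fun m => by
    simp only [q, Submodule.mkQ_apply, Submodule.Quotient.mk_eq_zero]
    exact Submodule.smul_mem_pointwise_smul m r ⊤ trivial
  ext S
  rw [← hq]
  simp [this]

lemma homotopy {e : V → ℕ} (he : Function.Injective e) {x : V → R} {r : R}
    (hr : r ∈ Ideal.span (Set.range x)) {s : ℕ} {c : Finset V → M} (hc : Sup (s + 1) c)
    (hdc : dK e x c = 0) : ∃ b, Sup s b ∧ dK e x b = r • c := by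
  induction hr using Submodule.span_induction with
  | mem r h =>
    obtain ⟨v, rfl⟩ := h
    refine ⟨cI R e v c, hc.cI e v, ?_⟩
    rw [← cI_dK he, hdc, map_zero, zero_add]
  | zero => exact ⟨0, fun _ _ => rfl, by simp⟩
  | add r r' _ _ h h' =>
    obtain ⟨b, hb, hd⟩ := h
    obtain ⟨b', hb', hd'⟩ := h'
    exact ⟨b + b', hb.add hb', by rw [map_add, hd, hd', add_smul]⟩
  | smul a r _ h =>
    obtain ⟨b, hb, hd⟩ := h
    exact ⟨a • b, hb.smul a, by rw [map_smul, hd, smul_smul, smul_eq_mul]⟩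

lemma KV.of_quot {e : V → ℕ} (he : Function.Injective e) {x : V → R} {t : ℕ} {r : R}
    (hr : IsSMulRegular M r) (hrx : r ∈ Ideal.span (Set.range x))
    (h : KV (QuotSMulTop r M) e x t) : KV M e x (t + 1) := by
  intro s hs c hc hdc
  let q : M →ₗ[R] QuotSMulTop r M := Submodule.mkQ (r • (⊤ : Submodule R M))
  have hq0 : ∀ m : M, q (r • m) = 0 := fun m => by
    simp only [q, Submodule.mkQ_apply]
    exact (Submodule.Quotient.mk_eq_zero _).2 (Submodule.smul_mem_pointwise_smul m r ⊤ trivial)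
  obtain ⟨b, hb, hdb⟩ := homotopy he hrx hc hdc
  rcases s with _ | s
  · refine ⟨0, fun _ _ => rfl, ?_⟩
    apply smul_pi_inj hr
    rw [← hdb, hb.zero_eq]; simp
  · obtain ⟨a, ha, hda⟩ := h s (by omega) (q ∘ b) (hb.map q.toAddMonoidHom) (by
      rw [dK_map, hdb]; ext S; simp [hq0])
    obtain ⟨a', ha', haa⟩ := exists_lift q ha (fun S => Submodule.mkQ_surjective _ _)
    have h1 : q ∘ (dK e x a') = q ∘ b := by rw [← dK_map, haa, hda]
    obtain ⟨b', hb', hbb⟩ := exists_smul_lift r (hb.sub (ha'.dK e x)) (by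
      change q ∘ _ = 0
      ext S
      have := congrFun h1 S
      simp only [Function.comp] at this
      simp [this])
    refine ⟨b', hb', smul_pi_inj hr ?_⟩
    rw [← map_smul, hbb, map_sub, dK_dK he, hdb, sub_zero]

/-- Setting a variable to zero. -/
lemma KV.retract {e : V → ℕ} (he : Function.Injective e) {x : V → R} {t : ℕ} (v : V)
    (p : M →ₗ[R] N) (σ : N →+ M) (hpσ : ∀ n, p (σ n) = n)
    (hσ : ∀ w ≠ v, ∀ n, σ (x w • n) = x w • σ n) (hN : ∀ n : N, x v • n = 0)
    (h : KV M e x t) : KV N e x (t - 1) := by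
  have hN' : ∀ c : Finset V → N, x v • c = 0 := fun c => by ext S; exact hN _
  have key : ∀ s < t - 1, ∀ c : Finset V → N, Sup (s + 1) c → dK e x c = 0 →
      ∃ b, Sup s b ∧ dK e x b = cI R e v (wE R e v c) := by
    intro s hs c hc hdc
    have h1 : wE R e v (dK e x (σ ∘ c)) = 0 := by
      have h2 : wE R e v (dK e x (σ ∘ c)) = wE R e v (σ ∘ (dK e x c)) := by
        have h3 : σ ∘ (dK e x c) = ∑ w, σ ∘ (x w • wE R e w c) := by
          ext S; simp [dK_apply, Finset.sum_apply]
        rw [h3, dK_apply, map_sum, map_sum]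
        refine Finset.sum_congr rfl fun w _ => ?_
        by_cases hw : w = v
        · subst hw
          have h4 : σ ∘ (x w • wE R e w c) = 0 := by
            rw [hN']; ext S; simp
          rw [h4, map_smul, wE_wE_self, smul_zero, map_zero]
        · congr 1
          rw [wE_map]
          ext S
          exact (hσ w hw _).symm
      rw [h2, hdc]
      have h5 : (σ ∘ (0 : Finset V → N)) = 0 := by ext S; simp
      rw [h5, map_zero]
    have h6 := wE_dK he x v (σ ∘ c)
    rw [h1, zero_add] at h6
    obtain ⟨b, hb, hdb⟩ := h (s + 1) (by omega) _ ((hc.map σ).wE (R := R) e v) h6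
    refine ⟨-(p ∘ cI R e v b), ((hb.cI e v).map p.toAddMonoidHom).neg, ?_⟩
    have h7 := cI_dK he x v b
    rw [hdb] at h7
    have h8 : p ∘ (cI R e v (wE R e v (σ ∘ c))) = cI R e v (wE R e v c) := by
      have h9 : p.toAddMonoidHom ∘ (σ ∘ c) = c := by ext S; simp [hpσ]
      conv_rhs => rw [← h9, wE_map, cI_map]
      rfl
    rw [map_neg, dK_map, ← h8]
    ext S
    have h10 := congrArg p (congrFun h7 S)
    simp only [Pi.add_apply, map_add, Pi.smul_apply, map_smul, hN] at h10
    simp only [Pi.neg_apply, Function.comp]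
    exact (eq_neg_of_add_eq_zero_left h10).symm
  intro s hs c hc hdc
  obtain ⟨b1, hb1, hdb1⟩ := key s hs c hc hdc
  have hdec := cI_wE_self (R := R) e v c
  rcases s with _ | s
  · refine ⟨b1, hb1, ?_⟩
    rw [(hc.cI (R := R) e v).zero_eq, map_zero, add_zero] at hdec
    rw [hdb1, hdec]
  · have ha := hc.cI (R := R) e v
    have hda : dK e x (cI R e v c) = 0 := by
      have := cI_dK he x v c
      rwa [hdc, map_zero, zero_add, hN'] at this
    obtain ⟨b2, hb2, hdb2⟩ := key s (by omega) _ ha hda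
    have h3 := cI_wE_self (R := R) e v (cI R e v c)
    rw [cI_cI_self, map_zero, add_zero] at h3
    rw [h3] at hdb2
    refine ⟨b1 - wE R e v b2, hb1.sub (hb2.wE e v), ?_⟩
    have h4 := wE_dK he x v b2
    rw [hdb2] at h4
    rw [map_sub, hdb1, sub_eq_add_neg, ← eq_neg_of_add_eq_zero_left h4, hdec]

/-- Vanishing from a weakly regular sequence. -/
lemma KV.of_regular {e : V → ℕ} (he : Function.Injective e) {x : V → R} (rs : List R)
    (hrs : ∀ r ∈ rs, r ∈ Ideal.span (Set.range x)) :
    ∀ (M : Type) [AddCommGroup M] [Module R M],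
      RingTheory.Sequence.IsWeaklyRegular M rs → KV M e x rs.length := by
  induction rs with
  | nil => intro M _ _ _ s hs; simp at hs
  | cons r rs ih =>
    intro M _ _ h
    rw [RingTheory.Sequence.isWeaklyRegular_cons_iff] at h
    exact KV.of_quot he h.1 (hrs r (by simp)) (ih (fun r hr => hrs r (by simp [hr])) _ h.2)

lemma KV.exists_regular_elt [IsNoetherianRing R] [Module.Finite R M] {e : V → ℕ} {x : V → R} {t : ℕ}
    (h : KV M e x (t + 1)) : ∃ r ∈ Ideal.span (Set.range x), IsSMulRegular M r := by
  have h0 : ∀ m : M, (∀ v, x v • m = 0) → m = 0 := by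
    intro m hm
    obtain ⟨b, hb, hdb⟩ := h 0 (by omega) (fun S => if S = ∅ then m else 0) (by
      intro S hS
      have : S ≠ ∅ := by rintro rfl; simp at hS
      simp [this]) (by
      rw [dK_apply]
      refine Finset.sum_eq_zero fun v _ => ?_
      ext S
      rw [Pi.smul_apply, wE_apply]
      split_ifs <;> simp [smul_comm (x v), hm])
    have := congrFun hdb ∅
    rw [hb.zero_eq] at this
    simpa using this.symm
  have hs : Subsingleton ((R ⧸ Ideal.span (Set.range x)) →ₗ[R] M) := by
    refine subsingleton_of_forall_eq 0 fun f => ?_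
    have h1 : f (Ideal.Quotient.mk _ 1) = 0 := by
      apply h0
      intro v
      rw [← map_smul]
      have : x v • (Ideal.Quotient.mk (Ideal.span (Set.range x)) 1) = 0 := by
        rw [← Ideal.Quotient.mk_eq_mk, ← Submodule.Quotient.mk_smul]
        rw [Ideal.Quotient.mk_eq_mk, Ideal.Quotient.eq_zero_iff_mem]
        simpa using Ideal.subset_span (Set.mem_range_self v)
      rw [this, map_zero]
    refine Submodule.linearMap_qext _ (LinearMap.ext_ring ?_)
    simpa using h1
  rw [IsSMulRegular.subsingleton_linearMap_iff, Ideal.annihilator_quotient] at hs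
  exact hs

lemma KV.exists_regular [IsNoetherianRing R] {e : V → ℕ} (he : Function.Injective e) {x : V → R}
    (t : ℕ) : ∀ (M : Type) [AddCommGroup M] [Module R M] [Module.Finite R M], KV M e x t →
      ∃ rs : List R, rs.length = t ∧ (∀ r ∈ rs, r ∈ Ideal.span (Set.range x)) ∧
        RingTheory.Sequence.IsWeaklyRegular M rs := by
  induction t with
  | zero => intro M _ _ _ _; exact ⟨[], rfl, by simp, by simp⟩
  | succ t ih =>
    intro M _ _ _ h
    obtain ⟨r, hr, hreg⟩ := h.exists_regular_elt
    obtain ⟨rs, h1, h2, h3⟩ := ih (QuotSMulTop r M) (h.quot he hreg)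
    refine ⟨r :: rs, by simp [h1], ?_, .cons hreg h3⟩
    intro r' hr'
    rcases List.mem_cons.1 hr' with rfl | h'
    · exact hr
    · exact h2 _ h'

/-- Length of a regular sequence is at most the dimension. -/
lemma length_le_dim [IsNoetherianRing R] (rs : List R) :
    ∀ (M : Type) [AddCommGroup M] [Module R M] [Module.Finite R M],
      RingTheory.Sequence.IsRegular M rs → ((rs.length : ℕ∞) : WithBot ℕ∞) ≤ Module.supportDim R M := by
  induction rs with
  | nil =>
    intro M _ _ _ h
    have := h.nontrivial
    have h1 := Module.supportDim_ne_bot_of_nontrivial R M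
    obtain ⟨n, hn⟩ := WithBot.ne_bot_iff_exists.1 h1
    rw [← hn]
    exact WithBot.coe_le_coe.2 (by simp)
  | cons r rs ih =>
    intro M _ _ _ h
    rw [RingTheory.Sequence.isRegular_cons_iff] at h
    have h1 := ih _ h.2
    have h2 := Module.supportDim_quotSMulTop_succ_le_of_notMem_minimalPrimes (M := M) (x := r)
      (fun _ => h.1.notMem_of_mem_minimalPrimes)
    refine le_trans ?_ h2
    have : (((r :: rs).length : ℕ∞) : WithBot ℕ∞) = ((rs.length : ℕ∞) : WithBot ℕ∞) + 1 := by
      simp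
    rw [this]
    gcongr

end Koszul
end KosDepth

namespace KosDepth

section Mono

variable {V : Type} [Fintype V] [DecidableEq V] {K : Type} [Field K]

/-- Membership is detected on monomials. -/
def MI (I : Ideal (MvPolynomial V K)) : Prop :=
  ∀ f, f ∈ I ↔ ∀ s ∈ f.support, monomial s (1 : K) ∈ I

lemma MI.of_isMonomialIdeal {I : Ideal (MvPolynomial V K)} (hI : IsMonomialIdeal K I) : MI I := by
  obtain ⟨S, rfl⟩ := hI
  intro f
  rw [mem_ideal_span_monomial_image]
  refine forall₂_congr fun s _ => ?_
  classical
  rw [mem_ideal_span_monomial_image, support_monomial]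
  simp

lemma mem_colonX {I : Ideal (MvPolynomial V K)} {m f : MvPolynomial V K} :
    f ∈ I.colon (Ideal.span {m}) ↔ f * m ∈ I := by
  rw [Ideal.colon_span, Submodule.mem_colon_singleton, smul_eq_mul]

lemma MI.colonX {I : Ideal (MvPolynomial V K)} (hI : MI I) (v : V) :
    MI (I.colon (Ideal.span {(X v : MvPolynomial V K)})) := by
  intro f
  rw [mem_colonX, hI, support_mul_X]
  simp only [Finset.mem_map, addRightEmbedding_apply, forall_exists_index, and_imp,
    forall_apply_eq_imp_iff₂]
  refine forall₂_congr fun s _ => ?_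
  rw [mem_colonX, X, monomial_mul, one_mul]

/-- Set `X v` to zero. -/
noncomputable def kill (v : V) : MvPolynomial V K →ₐ[K] MvPolynomial V K :=
  aeval (fun w => if w = v then 0 else X w)

lemma kill_monomial (v : V) (s : V →₀ ℕ) (a : K) :
    kill v (monomial s a) = if s v = 0 then monomial s a else 0 := by
  rw [kill, aeval_monomial]
  split_ifs with h
  · rw [monomial_eq]
    congr 1
    refine Finsupp.prod_congr fun w hw => ?_
    have : w ≠ v := by rintro rfl; simp [h] at hw
    rw [if_neg this]
  · rw [Finsupp.prod, Finset.prod_eq_zero (i := v) (by simpa using h), mul_zero]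
    simp [h]

lemma MI.monomial_mem {I : Ideal (MvPolynomial V K)} {s : V →₀ ℕ}
    (h : monomial s (1 : K) ∈ I) (a : K) : monomial s a ∈ I := by
  have := I.mul_mem_left (C a) h
  rwa [C_mul_monomial, mul_one] at this

lemma MI.kill_mem {I : Ideal (MvPolynomial V K)} (hI : MI I) (v : V) {f : MvPolynomial V K}
    (hf : f ∈ I) : kill v f ∈ I := by
  rw [f.as_sum, map_sum]
  refine Ideal.sum_mem _ fun s hs => ?_
  rw [kill_monomial]
  split_ifs
  · exact MI.monomial_mem ((hI f).1 hf s hs) _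
  · exact I.zero_mem

lemma kill_sub_mem (v : V) (f : MvPolynomial V K) :
    kill v f - f ∈ Ideal.span {(X v : MvPolynomial V K)} := by
  rw [← Ideal.Quotient.eq]
  have : (Ideal.Quotient.mkₐ K (Ideal.span {(X v : MvPolynomial V K)})).comp (kill v) =
      Ideal.Quotient.mkₐ K (Ideal.span {(X v : MvPolynomial V K)}) := by
    refine MvPolynomial.algHom_ext fun w => ?_
    simp only [AlgHom.comp_apply, kill, aeval_X]
    split_ifs with h
    · subst h
      rw [map_zero, eq_comm]
      exact Ideal.Quotient.eq_zero_iff_mem.2 (Ideal.mem_span_singleton_self _)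
    · rfl
  exact DFunLike.congr_fun this f

lemma KV_colonX {e : V → ℕ} (he : Function.Injective e) {I : Ideal (MvPolynomial V K)}
    (hI : MI I) (v : V) {t : ℕ}
    (h : KV (MvPolynomial V K ⧸ I) e (X : V → MvPolynomial V K) t) :
    KV (MvPolynomial V K ⧸ I.colon (Ideal.span {(X v : MvPolynomial V K)})) e
      (X : V → MvPolynomial V K) t := by
  set L : Ideal (MvPolynomial V K) := I ⊔ Ideal.span {X v} with hL
  have hIL : I ≤ L := le_sup_left
  have hXL : (X v : MvPolynomial V K) ∈ L :=
    (le_sup_right : _ ≤ L) (Ideal.mem_span_singleton_self _)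
  have hLI : L ≤ Ideal.comap (kill v).toRingHom I := by
    rw [hL]
    refine sup_le (fun f hf => hI.kill_mem v hf) ?_
    rw [Ideal.span_singleton_le_iff_mem]
    change kill v (X v) ∈ I
    simp [kill]
  let g : (MvPolynomial V K ⧸ I) →ₗ[MvPolynomial V K] (MvPolynomial V K ⧸ L) :=
    Submodule.mapQ I L LinearMap.id hIL
  have hN : KV (MvPolynomial V K ⧸ L) e (X : V → MvPolynomial V K) (t - 1) := by
    refine KV.retract he v g (Ideal.quotientMap I (kill v).toRingHom hLI).toAddMonoidHom
      ?_ ?_ ?_ h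
    · intro n
      obtain ⟨f, rfl⟩ := Ideal.Quotient.mk_surjective n
      change Ideal.Quotient.mk L (kill v f) = Ideal.Quotient.mk L f
      rw [Ideal.Quotient.eq]
      exact (le_sup_right : _ ≤ L) (kill_sub_mem v f)
    · intro w hw n
      obtain ⟨f, rfl⟩ := Ideal.Quotient.mk_surjective n
      change Ideal.Quotient.mk I (kill v (X w * f)) = Ideal.Quotient.mk I (X w * kill v f)
      rw [map_mul]
      simp [kill, hw]
    · intro n
      obtain ⟨f, rfl⟩ := Ideal.Quotient.mk_surjective n
      change Ideal.Quotient.mk L (X v * f) = 0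
      exact Ideal.Quotient.eq_zero_iff_mem.2 (L.mul_mem_right _ hXL)
  let j : (MvPolynomial V K ⧸ I.colon (Ideal.span {(X v : MvPolynomial V K)}))
      →ₗ[MvPolynomial V K] (MvPolynomial V K ⧸ I) :=
    Submodule.mapQ _ _ (LinearMap.lsmul (MvPolynomial V K) (MvPolynomial V K) (X v))
      (fun f hf => by
        rw [mem_colonX, mul_comm] at hf
        exact hf)
  refine KV.of_exact he j g ?_ ?_ ?_ h hN
  · rw [injective_iff_map_eq_zero]
    intro n hn
    obtain ⟨f, rfl⟩ := Ideal.Quotient.mk_surjective n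
    change Ideal.Quotient.mk I (X v * f) = 0 at hn
    rw [Ideal.Quotient.eq_zero_iff_mem] at hn ⊢
    rwa [mem_colonX, mul_comm]
  · intro n
    obtain ⟨f, rfl⟩ := Ideal.Quotient.mk_surjective n
    exact ⟨Ideal.Quotient.mk I f, rfl⟩
  · intro n
    obtain ⟨f, rfl⟩ := Ideal.Quotient.mk_surjective n
    change Ideal.Quotient.mk L f = 0 ↔ _
    rw [Ideal.Quotient.eq_zero_iff_mem]
    constructor
    · intro hf
      rw [hL, Submodule.mem_sup] at hf
      obtain ⟨a, ha, b, hb, rfl⟩ := hf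
      obtain ⟨c, rfl⟩ := Ideal.mem_span_singleton'.1 hb
      refine ⟨Ideal.Quotient.mk _ c, ?_⟩
      change Ideal.Quotient.mk I (X v * c) = Ideal.Quotient.mk I (a + c * X v)
      rw [Ideal.Quotient.eq]
      have : X v * c - (a + c * X v) = -a := by ring
      rw [this]
      exact I.neg_mem ha
    · rintro ⟨n, hn⟩
      obtain ⟨c, rfl⟩ := Ideal.Quotient.mk_surjective n
      change Ideal.Quotient.mk I (X v * c) = Ideal.Quotient.mk I f at hn
      rw [Ideal.Quotient.eq] at hn
      have := L.sub_mem (L.mul_mem_right c hXL) (hIL hn)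
      simpa using this

lemma colon_mul (I : Ideal (MvPolynomial V K)) (a b : MvPolynomial V K) :
    I.colon (Ideal.span {a * b}) = (I.colon (Ideal.span {a})).colon (Ideal.span {b}) := by
  ext f
  rw [mem_colonX, mem_colonX, mem_colonX, mul_assoc, mul_comm b a]

lemma colon_one (I : Ideal (MvPolynomial V K)) : I.colon (Ideal.span {(1 : MvPolynomial V K)}) = I := by
  ext f
  rw [mem_colonX, mul_one]

lemma KV_colon {e : V → ℕ} (he : Function.Injective e) {t : ℕ} (s : V →₀ ℕ) :
    ∀ I : Ideal (MvPolynomial V K), MI I →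
    KV (MvPolynomial V K ⧸ I) e (X : V → MvPolynomial V K) t →
    MI (I.colon (Ideal.span {monomial s (1 : K)})) ∧
    KV (MvPolynomial V K ⧸ I.colon (Ideal.span {monomial s (1 : K)})) e
      (X : V → MvPolynomial V K) t := by
  induction s using Finsupp.induction_linear with
  | zero =>
    intro I hI h
    rw [show monomial (0 : V →₀ ℕ) (1 : K) = 1 from rfl, colon_one]
    exact ⟨hI, h⟩
  | add s s' ih ih' =>
    intro I hI h
    have : monomial (s + s') (1 : K) = monomial s 1 * monomial s' 1 := by
      rw [monomial_mul, one_mul]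
    rw [this, colon_mul]
    exact ih' _ (ih I hI h).1 (ih I hI h).2
  | single v n =>
    intro I hI h
    induction n with
    | zero =>
      rw [Finsupp.single_zero, show monomial (0 : V →₀ ℕ) (1 : K) = 1 from rfl, colon_one]
      exact ⟨hI, h⟩
    | succ n ih =>
      have : monomial (Finsupp.single v (n + 1)) (1 : K) =
          monomial (Finsupp.single v n) 1 * X v := by
        rw [X, monomial_mul, one_mul, ← Finsupp.single_add]
      rw [this, colon_mul]
      exact ⟨ih.1.colonX v, KV_colonX he ih.1 v ih.2⟩

lemma mem_irr {f : MvPolynomial V K} :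
    f ∈ Ideal.span (Set.range (X : V → MvPolynomial V K)) ↔ ∀ s ∈ f.support, s ≠ 0 := by
  rw [← Set.image_univ, mem_ideal_span_X_image]
  refine forall₂_congr fun s _ => ?_
  simp [Finsupp.ext_iff]

lemma MI.le_irr {J : Ideal (MvPolynomial V K)} (hJ : MI J) (h1 : J ≠ ⊤) :
    J ≤ Ideal.span (Set.range (X : V → MvPolynomial V K)) := by
  intro f hf
  rw [mem_irr]
  rintro s hs rfl
  exact h1 ((Ideal.eq_top_iff_one _).2 ((hJ f).1 hf 0 hs))

lemma isRegular_of_weakly {J : Ideal (MvPolynomial V K)}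
    (hJ : J ≤ Ideal.span (Set.range (X : V → MvPolynomial V K)))
    {rs : List (MvPolynomial V K)}
    (hrs : ∀ r ∈ rs, r ∈ Ideal.span (Set.range (X : V → MvPolynomial V K)))
    (h : RingTheory.Sequence.IsWeaklyRegular (MvPolynomial V K ⧸ J) rs) :
    RingTheory.Sequence.IsRegular (MvPolynomial V K ⧸ J) rs := by
  refine ⟨h, fun htop => ?_⟩
  let g : (MvPolynomial V K ⧸ J) →ₗ[MvPolynomial V K]
      (MvPolynomial V K ⧸ Ideal.span (Set.range (X : V → MvPolynomial V K))) :=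
    Submodule.mapQ J _ LinearMap.id hJ
  have hle : Ideal.ofList rs • (⊤ : Submodule (MvPolynomial V K) (MvPolynomial V K ⧸ J)) ≤
      LinearMap.ker g := by
    rw [Submodule.smul_le]
    intro r hr n _
    have hr' : r ∈ Ideal.span (Set.range (X : V → MvPolynomial V K)) :=
      (Ideal.span_le.2 hrs) hr
    obtain ⟨f, rfl⟩ := Ideal.Quotient.mk_surjective n
    change Ideal.Quotient.mk _ (r * f) = 0
    exact Ideal.Quotient.eq_zero_iff_mem.2 (Ideal.mul_mem_right _ _ hr')
  rw [← htop] at hle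
  have h1 : Ideal.Quotient.mk J 1 ∈ LinearMap.ker g := hle trivial
  change Ideal.Quotient.mk (Ideal.span (Set.range (X : V → MvPolynomial V K))) 1 = 0 at h1
  rw [Ideal.Quotient.eq_zero_iff_mem, mem_irr] at h1
  exact h1 0 (by simp) rfl

end Mono

end KosDepth

theorem stmt11 (I : Ideal (MvPolynomial V K)) (hI : IsMonomialIdeal K I)
    (m : MvPolynomial V K) (hm : ∃ s : V →₀ ℕ, m = monomial s (1 : K)) (hmI : m ∉ I)
    (hCM : IsCMQuot K I) :
    IsCMQuot K (I.colon (Ideal.span {m})) := by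
  obtain ⟨s, rfl⟩ := hm
  have he : Function.Injective (fun v : V => (Fintype.equivFin V v : ℕ)) :=
    Fin.val_injective.comp (Fintype.equivFin V).injective
  have hMI := KosDepth.MI.of_isMonomialIdeal hI
  have hbound : ∀ (J : Ideal (MvPolynomial V K)) (rs : List (MvPolynomial V K)),
      RingTheory.Sequence.IsRegular (MvPolynomial V K ⧸ J) rs →
      ((rs.length : ℕ∞) : WithBot ℕ∞) ≤ ringKrullDim (MvPolynomial V K ⧸ J) := by
    intro J rs hrs
    rw [← Module.supportDim_quotient_eq_ringKrullDim]
    exact KosDepth.length_le_dim rs _ hrs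
  have hI1 : I ≠ ⊤ := by rintro rfl; exact hmI trivial
  unfold IsCMQuot at hCM ⊢
  -- a maximal regular sequence on R/I
  have hmem : gradedDepth K I ∈ {n | ∃ rs : List (MvPolynomial V K), rs.length = n ∧
      (∀ r ∈ rs, r ∈ Ideal.span (Set.range (X : V → MvPolynomial V K))) ∧
      RingTheory.Sequence.IsRegular (MvPolynomial V K ⧸ I) rs} := by
    refine Nat.sSup_mem ?_ ?_
    · have : Nontrivial (MvPolynomial V K ⧸ I) := Ideal.Quotient.nontrivial_iff.2 hI1
      exact ⟨0, [], rfl, by simp, RingTheory.Sequence.IsRegular.nil _ _⟩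
    · refine ⟨gradedDepth K I, ?_⟩
      rintro n ⟨rs, rfl, -, hrs⟩
      have := hbound I rs hrs
      rw [← hCM] at this
      exact_mod_cast this
  obtain ⟨rs, hlen, hrs, hreg⟩ := hmem
  have hKV := KosDepth.KV.of_regular he rs hrs _ hreg.toIsWeaklyRegular
  obtain ⟨hMJ, hKJ⟩ := KosDepth.KV_colon he s I hMI hKV
  set J := I.colon (Ideal.span {monomial s (1 : K)}) with hJdef
  have hJ1 : J ≠ ⊤ := by
    intro h
    have h1 : (1 : MvPolynomial V K) ∈ J := by rw [h]; trivial
    rw [hJdef, KosDepth.mem_colonX, one_mul] at h1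
    exact hmI h1
  obtain ⟨rs', hlen', hrs', hw⟩ := KosDepth.KV.exists_regular he _ _ hKJ
  have hreg' := KosDepth.isRegular_of_weakly (hMJ.le_irr hJ1) hrs' hw
  have hIJ : I ≤ J := fun f hf => by
    rw [hJdef, KosDepth.mem_colonX]; exact I.mul_mem_right _ hf
  have hdim : ringKrullDim (MvPolynomial V K ⧸ J) ≤ ringKrullDim (MvPolynomial V K ⧸ I) :=
    ringKrullDim_le_of_surjective (Ideal.Quotient.factor hIJ) (Ideal.Quotient.factor_surjective hIJ)
  have hle : ∀ rs : List (MvPolynomial V K),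
      RingTheory.Sequence.IsRegular (MvPolynomial V K ⧸ J) rs → rs.length ≤ gradedDepth K I := by
    intro l hl
    have := (hbound J l hl).trans hdim
    rw [← hCM] at this
    exact_mod_cast this
  have hdepth : gradedDepth K J = gradedDepth K I := by
    apply le_antisymm
    · refine csSup_le' ?_
      rintro n ⟨l, rfl, -, hl⟩
      exact hle l hl
    · refine le_csSup ⟨gradedDepth K I, ?_⟩ ⟨rs', by rw [hlen', hlen], hrs', hreg'⟩
      rintro n ⟨l, rfl, -, hl⟩
      exact hle l hl
  rw [hdepth]
  refine le_antisymm ?_ (hdim.trans hCM.ge)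
  have := hbound J rs' hreg'
  rwa [hlen', hlen] at this

end Statements
end
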